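/- arXiv:1509.02013 — 6 statements merged into one kernel-verified Lean document; each statement's English description precedes it below -/
import Mathlib

section
/- Let p be an odd prime and define c_p = 1/(2^{p²} p² (p² − 1)) + 1/(2^p p²) + (1/(2^{p²}(p² − 1))) · ∑_{d ∣ p²−1, d ≠ 1} 2^{(p²−1)(d−1)/d} φ(d), where φ is Euler's totient function. For each ν ≥ 1 let q = p^{2ν}, let F_q be the finite field with q elements, and let N_ν be the number of pairs (a₀, a₁) ∈ F_q × F_q such that T^{p²} + a₁T + a₀ is a sum of two squares. Then N_ν / q² converges to c_p as ν → ∞. -/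
/-- The constant `c_p` from the paper. -/
noncomputable def landauShortIntervalConstant (p : ℕ) : ℝ :=
  1 / (2 ^ (p ^ 2) * (p : ℝ) ^ 2 * ((p : ℝ) ^ 2 - 1)) +
  1 / (2 ^ p * (p : ℝ) ^ 2) +
  (1 / (2 ^ (p ^ 2) * ((p : ℝ) ^ 2 - 1))) *
    ∑ d ∈ (p ^ 2 - 1).divisors.erase 1,
      (2 : ℝ) ^ ((p ^ 2 - 1) * (d - 1) / d) * (Nat.totient d : ℝ)

/-!
Let `Q = p ^ j` and `f = T ^ Q + a T + c` with `a ≠ 0`. By Thue's lemma modulo a monic irreducible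
`P`, a squarefree monic polynomial is a sum of two squares if and only if `-T` is a square modulo
each of its monic irreducible factors `P`, that is, if and only if `N(-T mod P) = P(0)` is a
square in `F_q`. Hence `f(T + x)` is a sum of two squares if and only if `P(x)` is a square for
all `P ∣ f`. Since sums of quadratic characters are `o(q)` by Stepanov's method, this holds for
`q / 2 ^ r + o(q)` elements `x`, where `r` is the number of irreducible factors of `f`.

As `f(T + x) = T ^ Q + a T + c + (x ^ Q + a x)`, averaging over `c` turns translations into
changes of the constant term, and it remains to find `r`. Let `d` be the order of
`ζ = (-a) ^ ((q - 1) / (Q - 1))`. If `c` lies in the image of `x ↦ x ^ Q + a x`, we may take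
`c = 0`; Frobenius then acts on the roots of `f` as `θ ↦ ζ θ`, so the irreducible factors are `T`
and `(Q - 1) / d` others of degree `d`. This is always the case when `d ≠ 1`. When `d = 1`, the
image has index `Q`, and for `c` outside it Frobenius acts as `θ ↦ θ + b` with `b ≠ 0`, so that
all irreducible factors have degree `p`. Finally, as `a` varies, `ζ` takes each value in `F_Qˣ`
equally often.
-/

namespace ShortInterval

open Polynomial UniqueFactorizationMonoid

lemma exists_ne_zero_map_eq_zero_of_card_lt {G H : Type*} [AddGroup G] [AddGroup H] [Finite H]
    (f : G →+ H) (h : Nat.card H < Nat.card G) : ∃ x ≠ 0, f x = 0 := by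
  by_contra! hf
  refine h.not_ge (Nat.card_le_card_of_injective f ((injective_iff_map_eq_zero f).2 fun x hx => ?_))
  exact not_imp_not.1 (hf x) hx

lemma natDegree_le_of_mem_degreeLT_succ {R : Type*} [Semiring R] {g : R[X]} {n : ℕ}
    (hg : g ∈ degreeLT R (n + 1)) : g.natDegree ≤ n :=
  natDegree_le_iff_coeff_eq_zero.2 ((degree_lt_iff_coeff_zero _ _).1 (mem_degreeLT.1 hg))

section Bivariate

variable {R : Type*} [CommRing R]

lemma eq_zero_of_eval_X_pow_eq_zero {n : ℕ} {G : R[X][X]}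
    (hdeg : ∀ i, (G.coeff i).natDegree < n) (hG : G.eval (X ^ n) = 0) : G = 0 := by
  nontriviality R
  induction hd : G.natDegree using Nat.strong_induction_on generalizing G with
  | _ d ih =>
    have hdivX : G.coeff 0 + X ^ n * G.divX.eval (X ^ n) = 0 := by
      rw [← hG, ← congrArg (eval (X ^ n)) (divX_mul_X_add G)]
      simp only [eval_add, eval_mul, eval_X, eval_C]
      ring
    have hlt : (G.coeff 0).degree < (X ^ n : R[X]).degree := by
      rw [degree_X_pow]
      exact degree_le_natDegree.trans_lt (by exact_mod_cast hdeg 0)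
    obtain ⟨heval, hcoeff⟩ := div_modByMonic_unique _ _ (monic_X_pow n) ⟨hdivX, hlt⟩
    rw [zero_divByMonic] at heval
    rw [zero_modByMonic] at hcoeff
    rcases Nat.eq_zero_or_pos d with rfl | hpos
    · rw [eq_C_of_natDegree_eq_zero hd, ← hcoeff, C_0]
    · have hzero : G.divX = 0 := by
        refine ih _ ?_ (fun i => ?_) heval.symm rfl
        · rw [natDegree_divX_eq_natDegree_tsub_one]
          omega
        · rw [coeff_divX]
          exact hdeg _
      rw [← divX_mul_X_add G, hzero, ← hcoeff, zero_mul, C_0, add_zero]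

lemma natDegree_coeff_mul_le {G H : R[X][X]} {m n : ℕ} (hG : ∀ i, (G.coeff i).natDegree ≤ m)
    (hH : ∀ i, (H.coeff i).natDegree ≤ n) (i : ℕ) : ((G * H).coeff i).natDegree ≤ m + n := by
  rw [coeff_mul]
  exact natDegree_sum_le_of_forall_le _ _ fun x _ => natDegree_mul_le_of_le (hG x.1) (hH x.2)

lemma natDegree_eval_le {G : R[X][X]} {g : R[X]} {m n : ℕ}
    (hG : ∀ i, (G.coeff i).natDegree ≤ m) (hn : G.natDegree ≤ n) :
    (G.eval g).natDegree ≤ m + n * g.natDegree := by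
  rw [eval_eq_sum_range]
  refine natDegree_sum_le_of_forall_le _ _ fun i hi => ?_
  refine natDegree_mul_le_of_le (hG i) (natDegree_pow_le.trans ?_)
  gcongr
  exact (Nat.lt_succ_iff.1 (Finset.mem_range.1 hi)).trans hn

end Bivariate

section Stepanov

variable {F : Type*} [Field F]

lemma not_isSquare_of_squarefree {f : F[X]} (hf : Squarefree f) (hd : f.natDegree ≠ 0) :
    ¬ IsSquare f := by
  rintro ⟨r, rfl⟩
  have hr : IsUnit r := hf r dvd_rfl
  exact hd (natDegree_eq_zero_of_isUnit (hr.mul hr))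

lemma squarefree_C_mul {f : F[X]} (hf : Squarefree f) {c : F} (hc : c ≠ 0) :
    Squarefree (C c * f) :=
  (associated_unit_mul_left f _ (isUnit_C.2 hc.isUnit)).squarefree_iff.2 hf

lemma mul_sq_ne_sq_of_squarefree {f s : F[X]} (hf : Squarefree f) (hd : f.natDegree ≠ 0)
    (hs : s ≠ 0) (t : F[X]) : f * s ^ 2 ≠ t ^ 2 := by
  intro h
  obtain ⟨r, rfl⟩ : s ∣ t :=
    (IsIntegrallyClosed.pow_dvd_pow_iff two_ne_zero).1 ⟨f, by rw [← h, mul_comm]⟩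
  refine not_isSquare_of_squarefree hf hd ⟨r, mul_left_cancel₀ (pow_ne_zero 2 hs) ?_⟩
  linear_combination h

variable (p : ℕ) [ExpChar F p]

lemma eval_map_C_iterateFrobenius_X_pow (f : F[X]) (s : ℕ) :
    ((f.map (iterateFrobenius F p s)).map C).eval (X ^ p ^ s) = f ^ p ^ s := by
  rw [eval_map, ← comp, ← expand_eq_comp_X_pow, ← map_expand, map_iterateFrobenius_expand]

lemma eq_zero_of_eval_add_eval_mul_pow_eq_zero (hp : Odd p) {f : F[X]} (hf : Squarefree f)
    (hd : f.natDegree ≠ 0) {s K : ℕ} (hK : 2 * K + f.natDegree < p ^ s) {P S : F[X][X]}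
    (hP : ∀ i, (P.coeff i).natDegree ≤ K) (hS : ∀ i, (S.coeff i).natDegree ≤ K)
    (h : P.eval (X ^ p ^ s) + S.eval (X ^ p ^ s) * f ^ ((p ^ s + 1) / 2) = 0) :
    P = 0 ∧ S = 0 := by
  set f₂ : F[X] := f.map (iterateFrobenius F p s)
  have hsq : P ^ 2 = C f * (f₂.map C * S ^ 2) := by
    refine sub_eq_zero.1 (eq_zero_of_eval_X_pow_eq_zero (n := p ^ s) (fun i => ?_) ?_)
    · have hP2 := natDegree_coeff_mul_le hP hP i
      have hS2 := natDegree_coeff_mul_le (G := f₂.map C) (m := 0) (by simp [coeff_map])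
        (natDegree_coeff_mul_le hS hS) i
      rw [coeff_sub, coeff_C_mul, sq, sq]
      refine (natDegree_sub_le_of_le hP2 (natDegree_mul_le_of_le le_rfl hS2)).trans_lt ?_
      omega
    · have hpow : f ^ ((p ^ s + 1) / 2) * f ^ ((p ^ s + 1) / 2) = f * f ^ p ^ s := by
        rw [← pow_add, ← pow_succ']
        congr 1
        obtain ⟨k, hk⟩ : Odd (p ^ s) := hp.pow
        omega
      simp only [eval_sub, eval_pow, eval_mul, eval_C, f₂, eval_map_C_iterateFrobenius_X_pow]
      linear_combination (P.eval (X ^ p ^ s) - S.eval (X ^ p ^ s) * f ^ ((p ^ s + 1) / 2)) * h +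
        S.eval (X ^ p ^ s) ^ 2 * hpow
  have hS0 : S = 0 := by
    by_contra hS0
    have hlead := congrArg leadingCoeff hsq
    simp only [leadingCoeff_pow, leadingCoeff_mul, leadingCoeff_C,
      leadingCoeff_map_of_injective C_injective] at hlead
    have hf₂ : f₂.leadingCoeff ≠ 0 := by
      simpa [f₂] using hf.ne_zero
    refine mul_sq_ne_sq_of_squarefree (squarefree_C_mul hf hf₂) ?_ (leadingCoeff_ne_zero.2 hS0)
      P.leadingCoeff ?_
    · rwa [natDegree_C_mul hf₂]
    · rw [hlead]
      ring
  refine ⟨?_, hS0⟩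
  rw [hS0] at hsq
  simpa using hsq

/-- The bivariate polynomial `∑ j, a j * Y ^ j` of degree less than `J` in `Y`, whose coefficients
`a j` have degree less than `K` in `X`; the ring `F[X][X]` plays the role of `F[X][Y]`. -/
noncomputable def boxPoly (J K : ℕ) : (Fin J → degreeLT F K) →+ F[X][X] where
  toFun a := ∑ j, C (a j : F[X]) * X ^ (j : ℕ)
  map_zero' := by simp
  map_add' a b := by simp [add_mul, Finset.sum_add_distrib]

lemma boxPoly_apply {J K : ℕ} (a : Fin J → degreeLT F K) :
    boxPoly J K a = ∑ j, C (a j : F[X]) * X ^ (j : ℕ) := rfl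

lemma coeff_boxPoly {J K : ℕ} (a : Fin J → degreeLT F K) (j : Fin J) :
    (boxPoly J K a).coeff j = a j := by
  simp [boxPoly_apply, finsetSum_coeff, coeff_X_pow, Fin.val_inj]

lemma boxPoly_injective (J K : ℕ) : Function.Injective (boxPoly (F := F) J K) := fun a b h =>
  funext fun j => Subtype.ext (by rw [← coeff_boxPoly, ← coeff_boxPoly, h])

lemma natDegree_coeff_boxPoly_le {J K : ℕ} (a : Fin J → degreeLT F (K + 1)) (i : ℕ) :
    ((boxPoly J (K + 1) a).coeff i).natDegree ≤ K := by
  rw [boxPoly_apply, finsetSum_coeff]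
  refine natDegree_sum_le_of_forall_le _ _ fun j _ => ?_
  rw [coeff_C_mul, coeff_X_pow, mul_ite, mul_one, mul_zero]
  split_ifs
  · exact natDegree_le_of_mem_degreeLT_succ (a j).2
  · simp

lemma natDegree_boxPoly_le {J K : ℕ} (a : Fin (J + 1) → degreeLT F K) :
    (boxPoly (J + 1) K a).natDegree ≤ J := by
  rw [boxPoly_apply]
  exact natDegree_sum_le_of_forall_le _ _ fun j _ =>
    (natDegree_C_mul_X_pow_le _ _).trans (Nat.lt_succ_iff.1 j.2)

/-- The map `(P, S) ↦ P(Y = X) + S(Y = X) * g`, precomposed with the `p ^ m`-th power Frobenius on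
the coefficients of `P` and `S`. Stepanov's auxiliary polynomial comes from its kernel. -/
noncomputable def frobeniusEval (m : ℕ) (g : F[X]) : F[X][X] × F[X][X] →+ F[X] :=
  AddMonoidHom.coprod (eval₂RingHom (iterateFrobenius F[X] p m) X : F[X][X] →+ F[X])
    ((AddMonoidHom.mulRight g).comp (eval₂RingHom (iterateFrobenius F[X] p m) X : F[X][X] →+ F[X]))

lemma frobeniusEval_apply (m : ℕ) (g : F[X]) (P S : F[X][X]) :
    frobeniusEval p m g (P, S) = P.eval₂ (iterateFrobenius F[X] p m) X +
      S.eval₂ (iterateFrobenius F[X] p m) X * g := rfl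

lemma natDegree_eval₂_iterateFrobenius_le (m : ℕ) {P : F[X][X]} {J K : ℕ} (hJ : P.natDegree ≤ J)
    (hK : ∀ i, (P.coeff i).natDegree ≤ K) :
    (P.eval₂ (iterateFrobenius F[X] p m) X).natDegree ≤ p ^ m * K + J := by
  rw [← eval_map]
  refine (natDegree_eval_le (fun i => ?_) (natDegree_map_le.trans hJ)).trans_eq
    (by rw [natDegree_X, mul_one])
  rw [coeff_map, iterateFrobenius_def]
  exact natDegree_pow_le_of_le _ (hK i)

lemma natDegree_frobeniusEval_le (m : ℕ) (g : F[X]) {P S : F[X][X]} {J K : ℕ}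
    (hPJ : P.natDegree ≤ J) (hPK : ∀ i, (P.coeff i).natDegree ≤ K)
    (hSJ : S.natDegree ≤ J) (hSK : ∀ i, (S.coeff i).natDegree ≤ K) :
    (frobeniusEval p m g (P, S)).natDegree ≤ p ^ m * K + J + g.natDegree := by
  rw [frobeniusEval_apply]
  exact natDegree_add_le_of_degree_le
    ((natDegree_eval₂_iterateFrobenius_le p m hPJ hPK).trans (Nat.le_add_right _ _))
    (natDegree_mul_le_of_le (natDegree_eval₂_iterateFrobenius_le p m hSJ hSK) le_rfl)

lemma exists_frobeniusEval_eq_zero [Finite F] (m : ℕ) {g : F[X]} {J K : ℕ}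
    (h : p ^ m * K + J + g.natDegree + 1 < 2 * ((J + 1) * (K + 1))) :
    ∃ PS : F[X][X] × F[X][X], PS ≠ 0 ∧ (PS.1.natDegree ≤ J ∧ ∀ i, (PS.1.coeff i).natDegree ≤ K) ∧
      (PS.2.natDegree ≤ J ∧ ∀ i, (PS.2.coeff i).natDegree ≤ K) ∧ frobeniusEval p m g PS = 0 := by
  have : Fintype F := Fintype.ofFinite F
  set N := p ^ m * K + J + g.natDegree + 1
  set box := boxPoly (F := F) (J + 1) (K + 1)
  have hfin : ∀ n, Nat.card (degreeLT F n) = Nat.card F ^ n := fun n => by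
    rw [Nat.card_congr (degreeLTEquiv F n).toEquiv, Nat.card_fun, Nat.card_fin]
  have hfinite : ∀ n, Finite (degreeLT F n) := fun n => .of_equiv _ (degreeLTEquiv F n).toEquiv.symm
  let f : (Fin (J + 1) → degreeLT F (K + 1)) × (Fin (J + 1) → degreeLT F (K + 1)) →+
      degreeLT F N :=
    ((frobeniusEval p m g).comp (box.prodMap box)).codRestrict (degreeLT F N) fun a =>
      mem_degreeLT.2 <| degree_le_natDegree.trans_lt <| Nat.cast_lt.2 <| Nat.lt_succ_of_le <|
        natDegree_frobeniusEval_le p m g (natDegree_boxPoly_le _) (natDegree_coeff_boxPoly_le _)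
          (natDegree_boxPoly_le _) (natDegree_coeff_boxPoly_le _)
  obtain ⟨a, ha, hfa⟩ := exists_ne_zero_map_eq_zero_of_card_lt f <| by
    rw [Nat.card_prod, Nat.card_fun, hfin, hfin, Nat.card_fin, ← pow_mul, ← pow_add]
    refine Nat.pow_lt_pow_right Finite.one_lt_card (h.trans_eq ?_)
    ring
  refine ⟨(box a.1, box a.2), fun h0 => ha ?_,
    ⟨natDegree_boxPoly_le _, natDegree_coeff_boxPoly_le _⟩,
    ⟨natDegree_boxPoly_le _, natDegree_coeff_boxPoly_le _⟩, congrArg Subtype.val hfa⟩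
  have hbox := boxPoly_injective (F := F) (J + 1) (K + 1)
  exact Prod.ext (hbox (by simpa [box] using congrArg Prod.fst h0))
    (hbox (by simpa [box] using congrArg Prod.snd h0))

variable {p} [Fintype F]

lemma eval_eval_X_pow_pow {m s : ℕ} (hcard : Fintype.card F = p ^ (m + s)) (P : F[X][X]) (x : F) :
    ((P.eval (X ^ p ^ s)).eval x) ^ p ^ m =
      (P.eval₂ (iterateFrobenius F[X] p m) X).eval x := by
  have hx : x ^ p ^ (m + s) = x := hcard ▸ FiniteField.pow_card x
  rw [← eval_pow, ← iterateFrobenius_def p m]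
  change evalRingHom x (iterateFrobenius F[X] p m (P.eval₂ (.id _) (X ^ p ^ s))) = evalRingHom x _
  rw [hom_eval₂, hom_eval₂, hom_eval₂]
  simp [iterateFrobenius_def, ← pow_mul, ← pow_add, add_comm s m, hx]

lemma eval_frobeniusEval (hp : Odd p) {m s : ℕ} (hcard : Fintype.card F = p ^ (m + s))
    {f : F[X]} {x : F} (hx : f.eval x ^ (Fintype.card F / 2) = 1) (P S : F[X][X]) :
    (frobeniusEval p m (f ^ ((p ^ m + 1) / 2)) (P, S)).eval x =
      ((P.eval (X ^ p ^ s) + S.eval (X ^ p ^ s) * f ^ ((p ^ s + 1) / 2)).eval x) ^ p ^ m := by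
  have hexp : (p ^ s + 1) / 2 * p ^ m = Fintype.card F / 2 + (p ^ m + 1) / 2 := by
    obtain ⟨k, hk⟩ : Odd (p ^ m) := hp.pow
    obtain ⟨l, hl⟩ : Odd (p ^ s) := hp.pow
    have hhalf : Fintype.card F / 2 = 2 * k * l + k + l := by
      have hprod : (2 * k + 1) * (2 * l + 1) = 2 * (2 * k * l + k + l) + 1 := by ring
      rw [hcard, pow_add, hk, hl, hprod]
      omega
    rw [hhalf, hk, hl, show (2 * l + 1 + 1) / 2 = l + 1 by omega,
      show (2 * k + 1 + 1) / 2 = k + 1 by omega]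
    ring
  rw [frobeniusEval_apply, eval_add, eval_add, eval_mul, eval_mul, add_pow_expChar_pow, mul_pow,
    eval_eval_X_pow_pow hcard, eval_eval_X_pow_pow hcard, eval_pow, eval_pow, ← pow_mul, hexp,
    pow_add, hx, one_mul]

/-- Stepanov's method: a nonzero polynomial of small degree, obtained as a `p ^ m`-th root of an
element of the kernel of `frobeniusEval`, vanishes on `S`. -/
lemma card_le_of_eval_pow_eq_one (hp : Odd p) {m s D : ℕ}
    (hcard : Fintype.card F = p ^ (m + s)) (hs : (D + 1) * (p ^ m + 1) + D + 2 ≤ p ^ s)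
    {f : F[X]} (hf : Squarefree f) (hd : f.natDegree ≠ 0) (hD : f.natDegree ≤ D) {S : Finset F}
    (hS : ∀ x ∈ S, f.eval x ^ (Fintype.card F / 2) = 1) :
    2 * S.card ≤ Fintype.card F + 2 * (D + 2) * p ^ s := by
  obtain ⟨k, hk⟩ : Odd (p ^ m) := hp.pow
  obtain ⟨l, hl⟩ : Odd (p ^ s) := hp.pow
  have hk' : (p ^ m + 1) / 2 = k + 1 := by omega
  have hl' : (p ^ s + 1) / 2 = l + 1 := by omega
  have hfpow : ∀ n, (f ^ n).natDegree ≤ n * D := fun n => natDegree_pow_le_of_le n hD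
  set K := (D + 1) * (k + 1) with hK
  obtain ⟨⟨P, T⟩, hne, ⟨hPJ, hPK⟩, ⟨hTJ, hTK⟩, hzero⟩ :=
    exists_frobeniusEval_eq_zero p m (g := f ^ ((p ^ m + 1) / 2)) (J := k) (K := K) (by
      have := hfpow (k + 1)
      rw [hk', hk]
      nlinarith)
  set R := P.eval (X ^ p ^ s) + T.eval (X ^ p ^ s) * f ^ ((p ^ s + 1) / 2)
  have hKs : 2 * K + f.natDegree < p ^ s := by
    rw [hk] at hs
    nlinarith
  have hR : R ≠ 0 := fun h => by
    obtain ⟨hP, hT⟩ := eq_zero_of_eval_add_eval_mul_pow_eq_zero p hp hf hd hKs hPK hTK h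
    exact hne (Prod.ext hP hT)
  have hroot : ∀ x ∈ S, R.eval x = 0 := fun x hx => by
    have h := eval_frobeniusEval hp hcard (hS x hx) P T
    rw [hzero, eval_zero] at h
    exact eq_zero_of_pow_eq_zero h.symm
  have hdegR : R.natDegree ≤ K + k * p ^ s + (l + 1) * D := by
    have heval : ∀ G : F[X][X], G.natDegree ≤ k → (∀ i, (G.coeff i).natDegree ≤ K) →
        (G.eval (X ^ p ^ s)).natDegree ≤ K + k * p ^ s := fun G hJ hK => by
      simpa using natDegree_eval_le (g := X ^ p ^ s) hK hJ
    refine natDegree_add_le_of_degree_le ((heval P hPJ hPK).trans (Nat.le_add_right _ _)) ?_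
    exact natDegree_mul_le_of_le (heval T hTJ hTK) (hl' ▸ hfpow _)
  have hle : S.card ≤ R.natDegree := not_lt.1 fun h =>
    hR (eq_zero_of_natDegree_lt_card_of_eval_eq_zero' R S hroot h)
  rw [hcard, pow_add, hk]
  rw [hk] at hs
  have : (l + 1) * D ≤ p ^ s * D := Nat.mul_le_mul_right D (by omega)
  nlinarith

end Stepanov

lemma ringChar_ne_two {F : Type*} [Field F] {p : ℕ} [Fact p.Prime] [CharP F p] (hp : Odd p) :
    ringChar F ≠ 2 := by
  rw [ringChar.eq F p]
  rintro rfl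
  exact absurd hp (by decide)

section CharSum

/-- All quadratic character sums of squarefree nonconstant polynomials of degree at most `D` over
`F` have absolute value at most `E`. -/
def HasCharSumBound (F : Type*) [Field F] [Fintype F] [DecidableEq F] (D : ℕ) (E : ℝ) : Prop :=
  ∀ f : F[X], Squarefree f → f.natDegree ≠ 0 → f.natDegree ≤ D →
    |∑ x, (quadraticChar F (f.eval x) : ℝ)| ≤ E

variable {F : Type*} [Field F] [Fintype F] [DecidableEq F]

lemma card_filter_eval_eq_zero_le {f : F[X]} (hf : f ≠ 0) :
    (Finset.univ.filter fun x => f.eval x = 0).card ≤ f.natDegree := by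
  refine (Finset.card_le_card fun x hx => ?_).trans
    ((Multiset.toFinset_card_le f.roots).trans (card_roots' f))
  rw [Multiset.mem_toFinset, mem_roots hf]
  exact (Finset.mem_filter.1 hx).2

lemma sum_quadraticChar_le {p : ℕ} [Fact p.Prime] [CharP F p] (hp : Odd p) {m s D : ℕ}
    (hcard : Fintype.card F = p ^ (m + s)) (hs : (D + 1) * (p ^ m + 1) + D + 2 ≤ p ^ s)
    {f : F[X]} (hf : Squarefree f) (hd : f.natDegree ≠ 0) (hD : f.natDegree ≤ D) :
    ∑ x, quadraticChar F (f.eval x) ≤ 2 * (D + 2) * p ^ s + D := by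
  set S := Finset.univ.filter fun x => quadraticChar F (f.eval x) = 1
  set Z := Finset.univ.filter fun x => f.eval x = 0
  have hpoint : ∀ x, quadraticChar F (f.eval x) ≤
      2 * (if quadraticChar F (f.eval x) = 1 then 1 else 0) - 1 +
        (if f.eval x = 0 then 1 else 0) := fun x => by
    by_cases hx : f.eval x = 0
    · simp [hx]
    · rcases quadraticChar_dichotomy hx with h | h <;> simp [h, hx]
  have hsum : ∑ x, quadraticChar F (f.eval x) ≤ 2 * S.card - Fintype.card F + Z.card := by
    refine (Finset.sum_le_sum fun x _ => hpoint x).trans_eq ?_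
    rw [Finset.sum_add_distrib, Finset.sum_sub_distrib, ← Finset.mul_sum, Finset.sum_boole,
      Finset.sum_boole, Finset.sum_const, Finset.card_univ, nsmul_one]
  have hS := card_le_of_eval_pow_eq_one hp hcard hs hf hd hD (S := S) fun x hx => by
    rw [← quadraticChar_eq_pow_of_char_ne_two' (ringChar_ne_two hp), (Finset.mem_filter.1 hx).2,
      Int.cast_one]
  have hZ := (card_filter_eval_eq_zero_le hf.ne_zero).trans hD
  zify at hS hZ
  linarith

lemma hasCharSumBound_of_card {p : ℕ} [Fact p.Prime] [CharP F p] (hp : Odd p) {m s D : ℕ}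
    (hcard : Fintype.card F = p ^ (m + s)) (hs : (D + 1) * (p ^ m + 1) + D + 2 ≤ p ^ s) :
    HasCharSumBound F D (2 * (D + 2) * p ^ s + D) := by
  intro f hf hd hD
  obtain ⟨c, hc⟩ := FiniteField.exists_nonsquare (ringChar_ne_two (F := F) hp)
  have hc0 : c ≠ 0 := fun h => hc (h ▸ IsSquare.zero)
  have hpos := sum_quadraticChar_le hp hcard hs hf hd hD
  have hneg := sum_quadraticChar_le hp hcard hs (squarefree_C_mul hf hc0)
    (by rwa [natDegree_C_mul hc0]) (by rwa [natDegree_C_mul hc0])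
  simp only [eval_mul, eval_C, map_mul, quadraticChar_neg_one_iff_not_isSquare.2 hc, neg_one_mul,
    Finset.sum_neg_distrib] at hneg
  rw [abs_le']
  exact ⟨by exact_mod_cast hpos, by exact_mod_cast hneg⟩

end CharSum

lemma exists_forall_hasCharSumBound (p : ℕ) [Fact p.Prime] (hp : Odd p) (D : ℕ) {ε : ℝ}
    (hε : 0 < ε) :
    ∃ n₀, ∀ n ≥ n₀, ∀ (F : Type*) [Field F] [Fintype F] [DecidableEq F] [CharP F p],
      Fintype.card F = p ^ n → HasCharSumBound F D (ε * p ^ n) := by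
  have hp1 : 1 < p := (Fact.out : p.Prime).one_lt
  obtain ⟨m, hm⟩ := pow_unbounded_of_one_lt ((3 * D + 4) / ε) (Nat.one_lt_cast.2 hp1)
  obtain ⟨s₀, hs₀⟩ := pow_unbounded_of_one_lt ((D + 1) * (p ^ m + 1) + D + 2) hp1
  refine ⟨m + s₀, fun n hn F _ _ _ _ hcard f hf hd hD => ?_⟩
  obtain ⟨s, rfl⟩ := Nat.exists_eq_add_of_le ((Nat.le_add_right m s₀).trans hn)
  have hs : p ^ s₀ ≤ p ^ s := Nat.pow_le_pow_right hp1.le (Nat.add_le_add_iff_left.1 hn)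
  have hps : (1 : ℝ) ≤ p ^ s := by exact_mod_cast Nat.one_le_pow _ _ (hp1.le : 1 ≤ p)
  calc |∑ x, (quadraticChar F (f.eval x) : ℝ)|
      ≤ 2 * (D + 2) * p ^ s + D := hasCharSumBound_of_card hp hcard (hs₀.le.trans hs) f hf hd hD
    _ ≤ 2 * (D + 2) * p ^ s + D * p ^ s := by gcongr; exact le_mul_of_one_le_right D.cast_nonneg hps
    _ = (3 * D + 4) * p ^ s := by ring
    _ ≤ ε * p ^ m * p ^ s := by gcongr; exact ((div_lt_iff₀' hε).1 hm).le
    _ = ε * p ^ (m + s) := by ring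

section Equidistribution

variable {F : Type*} [Field F] [Fintype F] [DecidableEq F] {ι : Type*}

lemma half_one_add_quadraticChar {y : F} (hy : y ≠ 0) :
    (1 + (quadraticChar F y : ℝ)) / 2 = if IsSquare y then 1 else 0 := by
  split_ifs with h
  · rw [(quadraticChar_one_iff_isSquare hy).2 h]
    norm_num
  · rw [quadraticChar_neg_one_iff_not_isSquare.2 h]
    norm_num

lemma half_one_add_quadraticChar_mem_Icc (y : F) :
    (1 + (quadraticChar F y : ℝ)) / 2 ∈ Set.Icc (0 : ℝ) 1 := by
  by_cases hy : y = 0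
  · norm_num [hy]
  · rw [half_one_add_quadraticChar hy]
    split_ifs <;> simp

lemma abs_indicator_sub_prod_le (s : Finset ι) (y : ι → F) :
    |(if ∀ i ∈ s, IsSquare (y i) then 1 else 0) - ∏ i ∈ s, (1 + (quadraticChar F (y i) : ℝ)) / 2| ≤
      if ∏ i ∈ s, y i = 0 then 1 else 0 := by
  by_cases h : ∏ i ∈ s, y i = 0
  · have h0 : 0 ≤ ∏ i ∈ s, (1 + (quadraticChar F (y i) : ℝ)) / 2 :=
      Finset.prod_nonneg fun i _ => (half_one_add_quadraticChar_mem_Icc (y i)).1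
    have h1 : ∏ i ∈ s, (1 + (quadraticChar F (y i) : ℝ)) / 2 ≤ 1 :=
      Finset.prod_le_one (fun i _ => (half_one_add_quadraticChar_mem_Icc (y i)).1)
        fun i _ => (half_one_add_quadraticChar_mem_Icc (y i)).2
    rw [if_pos h, abs_le]
    split_ifs <;> constructor <;> linarith
  · rw [Finset.prod_congr rfl fun i hi =>
      half_one_add_quadraticChar (Finset.prod_ne_zero_iff.1 h i hi), Finset.prod_ite_zero]
    simp [h]

variable {D : ℕ} {E : ℝ} {g : ι → F[X]} {s : Finset ι}

lemma abs_sum_prod_quadraticChar_sub_le (hE : HasCharSumBound F D E) (hE0 : 0 ≤ E)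
    (hsq : Squarefree (∏ i ∈ s, g i)) (hdeg : ∀ i ∈ s, (g i).natDegree ≠ 0)
    (hD : (∏ i ∈ s, g i).natDegree ≤ D) :
    |∑ x, ∏ i ∈ s, (1 + (quadraticChar F ((g i).eval x) : ℝ)) - Fintype.card F| ≤
      2 ^ s.card * E := by
  classical
  have hexpand : ∑ x, ∏ i ∈ s, (1 + (quadraticChar F ((g i).eval x) : ℝ)) =
      ∑ t ∈ s.powerset, ∑ x, (quadraticChar F ((∏ i ∈ t, g i).eval x) : ℝ) := by
    rw [Finset.sum_comm]
    simp only [Finset.prod_one_add, eval_prod, map_prod, Int.cast_prod]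
  have hterm : ∀ t ∈ s.powerset.erase ∅,
      |∑ x, (quadraticChar F ((∏ i ∈ t, g i).eval x) : ℝ)| ≤ E := fun t ht => by
    obtain ⟨hne, hts⟩ := Finset.mem_erase.1 ht
    have hdvd := Finset.prod_dvd_prod_of_subset _ _ g (Finset.mem_powerset.1 hts)
    obtain ⟨i, hi⟩ := Finset.nonempty_iff_ne_empty.2 hne
    refine hE _ (hsq.squarefree_of_dvd hdvd) (fun h0 => ?_)
      ((natDegree_le_of_dvd hdvd hsq.ne_zero).trans hD)
    have hle := natDegree_le_of_dvd (Finset.dvd_prod_of_mem g hi)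
      (hsq.squarefree_of_dvd hdvd).ne_zero
    exact hdeg i (Finset.mem_powerset.1 hts hi) (Nat.le_zero.1 (h0 ▸ hle))
  rw [hexpand, ← Finset.add_sum_erase _ _ (Finset.empty_mem_powerset s)]
  simp only [Finset.prod_empty, eval_one, map_one, Int.cast_one, Finset.sum_const,
    Finset.card_univ, nsmul_one, add_sub_cancel_left]
  calc |∑ t ∈ s.powerset.erase ∅, ∑ x, (quadraticChar F ((∏ i ∈ t, g i).eval x) : ℝ)|
      ≤ ∑ _t ∈ s.powerset.erase ∅, E :=
        (Finset.abs_sum_le_sum_abs _ _).trans (Finset.sum_le_sum hterm)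
    _ ≤ ∑ _t ∈ s.powerset, E :=
        Finset.sum_le_sum_of_subset_of_nonneg (Finset.erase_subset _ _) fun _ _ _ => hE0
    _ = 2 ^ s.card * E := by simp

lemma abs_card_forall_isSquare_sub_le (hE : HasCharSumBound F D E) (hE0 : 0 ≤ E)
    (hsq : Squarefree (∏ i ∈ s, g i)) (hdeg : ∀ i ∈ s, (g i).natDegree ≠ 0)
    (hD : (∏ i ∈ s, g i).natDegree ≤ D) :
    |(Nat.card {x // ∀ i ∈ s, IsSquare ((g i).eval x)} : ℝ) - Fintype.card F / 2 ^ s.card| ≤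
      E + D := by
  have hcard : (Nat.card {x // ∀ i ∈ s, IsSquare ((g i).eval x)} : ℝ) =
      ∑ x, if ∀ i ∈ s, IsSquare ((g i).eval x) then (1 : ℝ) else 0 := by
    rw [Nat.card_eq_fintype_card, Fintype.card_subtype, Finset.sum_boole]
  have hzeros : |(Nat.card {x // ∀ i ∈ s, IsSquare ((g i).eval x)} : ℝ) -
      ∑ x, ∏ i ∈ s, (1 + (quadraticChar F ((g i).eval x) : ℝ)) / 2| ≤ D := by
    rw [hcard, ← Finset.sum_sub_distrib]
    calc _ ≤ ∑ x, if (∏ i ∈ s, g i).eval x = 0 then (1 : ℝ) else 0 :=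
          (Finset.abs_sum_le_sum_abs _ _).trans <| Finset.sum_le_sum fun x _ => by
            rw [eval_prod]
            exact abs_indicator_sub_prod_le s fun i => (g i).eval x
      _ ≤ D := by
        rw [Finset.sum_boole]
        exact_mod_cast (card_filter_eval_eq_zero_le hsq.ne_zero).trans hD
  have hchar : |∑ x, ∏ i ∈ s, (1 + (quadraticChar F ((g i).eval x) : ℝ)) / 2 -
      Fintype.card F / 2 ^ s.card| ≤ E := by
    simp only [Finset.prod_div_distrib, Finset.prod_const, ← Finset.sum_div]
    rw [← sub_div, abs_div, abs_of_pos (by positivity : (0 : ℝ) < 2 ^ s.card),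
      div_le_iff₀' (by positivity)]
    exact abs_sum_prod_quadraticChar_sub_le hE hE0 hsq hdeg hD
  calc _ ≤ _ := abs_sub_le _ (∑ x, ∏ i ∈ s, (1 + (quadraticChar F ((g i).eval x) : ℝ)) / 2) _
    _ ≤ E + D := by linarith

end Equidistribution

section SumOfTwoSquares

/-- The polynomial `f` is a sum of two squares, that is, a norm from `R[√-X]`. -/
def IsSumOfTwoSquares {R : Type*} [CommRing R] (f : R[X]) : Prop :=
  ∃ A B : R[X], f = A ^ 2 + X * B ^ 2

section CommRing

variable {R : Type*} [CommRing R] {f g : R[X]}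

lemma isSumOfTwoSquares_sq (f : R[X]) : IsSumOfTwoSquares (f ^ 2) := ⟨f, 0, by simp⟩

lemma IsSumOfTwoSquares.mul (hf : IsSumOfTwoSquares f) (hg : IsSumOfTwoSquares g) :
    IsSumOfTwoSquares (f * g) := by
  obtain ⟨A, B, rfl⟩ := hf
  obtain ⟨C, D, rfl⟩ := hg
  exact ⟨A * C - X * B * D, A * D + B * C, by ring⟩

lemma IsSumOfTwoSquares.prod {ι : Type*} {s : Finset ι} {P : ι → R[X]}
    (h : ∀ i ∈ s, IsSumOfTwoSquares (P i)) : IsSumOfTwoSquares (∏ i ∈ s, P i) :=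
  Finset.prod_induction P _ (fun _ _ => .mul) (by simpa using isSumOfTwoSquares_sq 1) h

end CommRing

section Field

variable {F : Type*} [Field F]

lemma degree_sq_ne_degree_X_mul_sq {A B : F[X]} (h : A ≠ 0 ∨ B ≠ 0) :
    (A ^ 2).degree ≠ (X * B ^ 2).degree := by
  rcases eq_or_ne B 0 with rfl | hB
  · simpa using degree_ne_bot.2 (pow_ne_zero 2 (h.resolve_right (· rfl)))
  have hXB : X * B ^ 2 ≠ 0 := mul_ne_zero X_ne_zero (pow_ne_zero 2 hB)
  rcases eq_or_ne A 0 with rfl | -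
  · simpa using (degree_ne_bot.2 hXB).symm
  · intro heq
    have := natDegree_eq_of_degree_eq heq
    rw [natDegree_pow, natDegree_mul X_ne_zero (pow_ne_zero 2 hB), natDegree_X,
      natDegree_pow] at this
    omega

lemma exists_leadingCoeff_sq_add_X_mul_sq_eq_sq {A B : F[X]} (h : A ≠ 0 ∨ B ≠ 0) :
    ∃ r ≠ 0, (A ^ 2 + X * B ^ 2).leadingCoeff = r ^ 2 := by
  rcases (degree_sq_ne_degree_X_mul_sq h).lt_or_gt with hlt | hlt
  · refine ⟨B.leadingCoeff, ?_, by rw [leadingCoeff_add_of_degree_lt hlt]; simp⟩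
    rw [leadingCoeff_ne_zero]
    rintro rfl
    simp at hlt
  · refine ⟨A.leadingCoeff, ?_, by rw [leadingCoeff_add_of_degree_lt' hlt]; simp⟩
    rw [leadingCoeff_ne_zero]
    rintro rfl
    simp at hlt

lemma norm_neg_root {P : F[X]} (hP : P.Monic) :
    Algebra.norm F (-(AdjoinRoot.root P)) = P.eval 0 := by
  have hnorm := Algebra.PowerBasis.norm_gen_eq_coeff_zero_minpoly (AdjoinRoot.powerBasis' hP)
  have hminpoly : minpoly F (AdjoinRoot.root P) = P := by
    rw [AdjoinRoot.minpoly_root hP.ne_zero, hP.leadingCoeff, inv_one, C_1, mul_one]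
  rw [AdjoinRoot.powerBasis'_gen, hminpoly, AdjoinRoot.powerBasis'_dim] at hnorm
  have hneg : -AdjoinRoot.root P = algebraMap F (AdjoinRoot P) (-1) * AdjoinRoot.root P := by simp
  rw [hneg, map_mul, Algebra.norm_algebraMap, (AdjoinRoot.powerBasis' hP).finrank,
    AdjoinRoot.powerBasis'_dim, hnorm, ← mul_assoc, ← mul_pow, neg_one_mul, neg_neg, one_pow,
    one_mul, coeff_zero_eq_eval_zero]

lemma isSquare_norm_iff {K : Type*} [Field K] [Finite K] [Algebra F K] (hF : ringChar F ≠ 2)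
    {x : K} : IsSquare (Algebra.norm F x) ↔ IsSquare x := by
  refine ⟨fun h => ?_, fun h => h.map (Algebra.norm F)⟩
  rcases eq_or_ne x 0 with rfl | hx
  · exact .zero
  have : Finite F := .of_injective _ (algebraMap F K).injective
  have := Fintype.ofFinite F
  have := Fintype.ofFinite K
  have hK : ringChar K ≠ 2 := Algebra.ringChar_eq F K ▸ hF
  have hexp : (Nat.card K - 1) / (Nat.card F - 1) * (Fintype.card F / 2) = Fintype.card K / 2 := by
    have hF2 := FiniteField.odd_card_of_char_ne_two hF
    have hK2 := FiniteField.odd_card_of_char_ne_two hK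
    have hF1 : 1 < Fintype.card F := Fintype.one_lt_card
    obtain ⟨k, hk⟩ : Fintype.card F - 1 ∣ Fintype.card K - 1 := by
      rw [Module.card_eq_pow_finrank (K := F) (V := K)]
      simpa using Nat.sub_dvd_pow_sub_pow (Fintype.card F) 1 (Module.finrank F K)
    obtain ⟨a, ha⟩ := Nat.odd_iff.2 hF2
    have ha2 : Fintype.card F / 2 = a := by omega
    rw [Nat.card_eq_fintype_card, Nat.card_eq_fintype_card, hk,
      Nat.mul_div_cancel_left _ (by omega), ha2]
    rw [ha, Nat.add_sub_cancel, mul_assoc, mul_comm a] at hk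
    omega
  rw [FiniteField.isSquare_iff hF (Algebra.norm_ne_zero_iff.2 hx)] at h
  rw [FiniteField.isSquare_iff hK hx, ← hexp, pow_mul, ← FiniteField.algebraMap_norm_eq_pow,
    ← map_pow, h, map_one]

lemma exists_mk_add_mul_mk_eq_zero {P : F[X]} (hP : P ≠ 0) (κ : AdjoinRoot P) {a b : ℕ}
    (hab : P.natDegree < a + b + 2) :
    ∃ A B : F[X], (A ≠ 0 ∨ B ≠ 0) ∧ A.natDegree ≤ a ∧ B.natDegree ≤ b ∧
      AdjoinRoot.mk P A + κ * AdjoinRoot.mk P B = 0 := by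
  have hfinrank : ∀ k, Module.finrank F (degreeLT F k) = k := fun k => by
    rw [(degreeLTEquiv F k).finrank_eq, Module.finrank_fin_fun]
  have hfinite : ∀ k, Module.Finite F (degreeLT F k) := fun k =>
    .equiv (degreeLTEquiv F k).symm
  have : Module.Finite F (AdjoinRoot P) := (AdjoinRoot.powerBasis hP).finite
  let Φ : degreeLT F (a + 1) × degreeLT F (b + 1) →ₗ[F] AdjoinRoot P :=
    ((AdjoinRoot.mkₐ P).toLinearMap ∘ₗ (degreeLT F (a + 1)).subtype).coprod
      (LinearMap.mulLeft F κ ∘ₗ (AdjoinRoot.mkₐ P).toLinearMap ∘ₗ (degreeLT F (b + 1)).subtype)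
  have hker : LinearMap.ker Φ ≠ ⊥ := LinearMap.ker_ne_bot_of_finrank_lt <| by
    rw [Module.finrank_prod, hfinrank, hfinrank, (AdjoinRoot.powerBasis hP).finrank,
      AdjoinRoot.powerBasis_dim]
    omega
  obtain ⟨⟨⟨A, hA⟩, ⟨B, hB⟩⟩, hAB, hne⟩ := Submodule.exists_mem_ne_zero_of_ne_bot hker
  refine ⟨A, B, ?_, natDegree_le_of_mem_degreeLT_succ hA, natDegree_le_of_mem_degreeLT_succ hB,
    by simpa [Φ] using hAB⟩
  contrapose! hne
  obtain ⟨rfl, rfl⟩ := hne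
  rfl

lemma isSumOfTwoSquares_of_isSquare_neg_root {P : F[X]} (hP : P.Monic) (hP1 : P.natDegree ≠ 0)
    (h : IsSquare (-AdjoinRoot.root P)) : IsSumOfTwoSquares P := by
  obtain ⟨κ, hκ⟩ := h
  set n := P.natDegree
  obtain ⟨A, B, hne, hA, hB, hAB⟩ :=
    exists_mk_add_mul_mk_eq_zero hP.ne_zero κ (a := n / 2) (b := (n - 1) / 2) (by omega)
  have hdvd : P ∣ A ^ 2 + X * B ^ 2 := by
    rw [← AdjoinRoot.mk_eq_zero, map_add, map_mul, map_pow, map_pow, AdjoinRoot.mk_X]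
    linear_combination (AdjoinRoot.mk P A - κ * AdjoinRoot.mk P B) * hAB -
      AdjoinRoot.mk P B ^ 2 * hκ
  have hdeg : (A ^ 2 + X * B ^ 2).natDegree ≤ n :=
    natDegree_add_le_of_degree_le
      ((natDegree_pow_le_of_le 2 hA).trans (by omega))
      ((natDegree_mul_le_of_le natDegree_X_le (natDegree_pow_le_of_le 2 hB)).trans (by omega))
  obtain ⟨r, hr0, hr⟩ := exists_leadingCoeff_sq_add_X_mul_sq_eq_sq hne
  have heq : A ^ 2 + X * B ^ 2 = C (r ^ 2) * P :=
    hr ▸ eq_leadingCoeff_mul_of_monic_of_dvd_of_natDegree_le hP hdvd hdeg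
  have hinv : (C r⁻¹ : F[X]) ^ 2 * C (r ^ 2) = 1 := by
    rw [← C_pow, ← C_mul, ← mul_pow, inv_mul_cancel₀ hr0, one_pow, C_1]
  exact ⟨C r⁻¹ * A, C r⁻¹ * B, by linear_combination -(C r⁻¹) ^ 2 * heq - P * hinv⟩

lemma isSquare_neg_root_of_dvd {f P : F[X]} (hf : Squarefree f) (h : IsSumOfTwoSquares f)
    (hirr : Irreducible P) (hdvd : P ∣ f) : IsSquare (-AdjoinRoot.root P) := by
  have : Fact (Irreducible P) := ⟨hirr⟩
  obtain ⟨A, B, hAB⟩ := h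
  have hroot : AdjoinRoot.mk P A ^ 2 + AdjoinRoot.root P * AdjoinRoot.mk P B ^ 2 = 0 := by
    rw [← AdjoinRoot.mk_X, ← map_pow, ← map_pow, ← map_mul, ← map_add, ← hAB]
    exact AdjoinRoot.mk_eq_zero.2 hdvd
  have hB : AdjoinRoot.mk P B ≠ 0 := fun hB => by
    obtain ⟨A', rfl⟩ := AdjoinRoot.mk_eq_zero.1 (by simpa [hB] using hroot : AdjoinRoot.mk P A = 0)
    obtain ⟨B', rfl⟩ := AdjoinRoot.mk_eq_zero.1 hB
    exact hirr.not_isUnit (hf P ⟨A' ^ 2 + X * B' ^ 2, by rw [hAB]; ring⟩)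
  refine ⟨AdjoinRoot.mk P A / AdjoinRoot.mk P B, ?_⟩
  field_simp
  linear_combination -hroot

lemma isSumOfTwoSquares_prod_iff [Finite F] (hF : ringChar F ≠ 2) {ι : Type*} {s : Finset ι}
    {P : ι → F[X]} (hmonic : ∀ i ∈ s, (P i).Monic) (hirr : ∀ i ∈ s, Irreducible (P i))
    (hsq : Squarefree (∏ i ∈ s, P i)) :
    IsSumOfTwoSquares (∏ i ∈ s, P i) ↔ ∀ i ∈ s, IsSquare ((P i).eval 0) := by
  have hroot : ∀ i ∈ s, (IsSquare (-AdjoinRoot.root (P i)) ↔ IsSquare ((P i).eval 0)) := by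
    intro i hi
    have : Fact (Irreducible (P i)) := ⟨hirr i hi⟩
    have : Module.Finite F (AdjoinRoot (P i)) := (AdjoinRoot.powerBasis' (hmonic i hi)).finite
    have : Finite (AdjoinRoot (P i)) := Module.finite_of_finite F
    rw [← norm_neg_root (hmonic i hi), isSquare_norm_iff hF]
  refine ⟨fun h i hi => (hroot i hi).1 ?_, fun h => .prod fun i hi => ?_⟩
  · exact isSquare_neg_root_of_dvd hsq h (hirr i hi) (Finset.dvd_prod_of_mem P hi)
  · exact isSumOfTwoSquares_of_isSquare_neg_root (hmonic i hi) (hirr i hi).natDegree_pos.ne'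
      ((hroot i hi).2 (h i hi))

end Field

end SumOfTwoSquares

section Taylor

lemma irreducible_taylor_iff {R : Type*} [CommRing R] {f : R[X]} {x : R} :
    Irreducible (taylor x f) ↔ Irreducible f :=
  MulEquiv.irreducible_iff (taylorEquiv x)

lemma squarefree_taylor {R : Type*} [CommRing R] {f : R[X]} (hf : Squarefree f) (x : R) :
    Squarefree (taylor x f) := by
  intro r hr
  obtain ⟨r, rfl⟩ := (taylorEquiv x).surjective r
  have hdvd : r * r ∣ f := by
    rwa [← map_dvd_iff (taylorEquiv x), map_mul]
  exact (hf r hdvd).map (taylorEquiv x)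

lemma monic_taylor {R : Type*} [CommSemiring R] {f : R[X]} (hf : f.Monic) (x : R) :
    (taylor x f).Monic := by
  rw [Monic, leadingCoeff_taylor, hf]

end Taylor

section PrimeFactors

variable {F : Type*} [Field F] [DecidableEq F] {f P : F[X]}

lemma irreducible_of_mem_primeFactors (hP : P ∈ primeFactors f) : Irreducible P :=
  irreducible_of_normalized_factor P (mem_primeFactors.1 hP)

lemma monic_of_mem_primeFactors (hP : P ∈ primeFactors f) : P.Monic :=
  (normalize_eq_self_iff_monic (irreducible_of_mem_primeFactors hP).ne_zero).1
    (normalize_normalized_factor P (mem_primeFactors.1 hP))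

lemma dvd_of_mem_primeFactors (hP : P ∈ primeFactors f) : P ∣ f :=
  dvd_of_mem_normalizedFactors (mem_primeFactors.1 hP)

lemma prod_primeFactors_eq_self (hmonic : f.Monic) (hf : Squarefree f) :
    ∏ P ∈ primeFactors f, P = f :=
  eq_of_monic_of_associated (monic_prod_of_monic _ _ fun _ => monic_of_mem_primeFactors) hmonic
    (radical_associated hf.isRadical hf.ne_zero)

lemma sum_natDegree_primeFactors (hmonic : f.Monic) (hf : Squarefree f) :
    ∑ P ∈ primeFactors f, P.natDegree = f.natDegree := by
  rw [← natDegree_prod_of_monic _ _ fun _ => monic_of_mem_primeFactors,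
    prod_primeFactors_eq_self hmonic hf]

lemma isSumOfTwoSquares_taylor_iff [Finite F] (hF : ringChar F ≠ 2) (hmonic : f.Monic)
    (hf : Squarefree f) (x : F) :
    IsSumOfTwoSquares (taylor x f) ↔ ∀ P ∈ primeFactors f, IsSquare (P.eval x) := by
  have hprod : taylor x f = ∏ P ∈ primeFactors f, taylor x P := by
    conv_lhs => rw [← prod_primeFactors_eq_self hmonic hf]
    exact map_prod (taylorEquiv x) _ _
  have hsq := squarefree_taylor hf x
  rw [hprod] at hsq ⊢
  rw [isSumOfTwoSquares_prod_iff hF (fun P hP => monic_taylor (monic_of_mem_primeFactors hP) x)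
    (fun P hP => irreducible_taylor_iff.2 (irreducible_of_mem_primeFactors hP)) hsq]
  simp only [taylor_eval, zero_add]

lemma abs_card_isSumOfTwoSquares_taylor_sub_le [Fintype F] (hF : ringChar F ≠ 2) {D : ℕ} {E : ℝ}
    (hE : HasCharSumBound F D E) (hE0 : 0 ≤ E) (hmonic : f.Monic) (hf : Squarefree f)
    (hD : f.natDegree ≤ D) :
    |(Nat.card {x : F // IsSumOfTwoSquares (taylor x f)} : ℝ) -
      Fintype.card F / 2 ^ (primeFactors f).card| ≤ E + D := by
  simp only [isSumOfTwoSquares_taylor_iff hF hmonic hf]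
  have hprod := prod_primeFactors_eq_self hmonic hf
  exact abs_card_forall_isSquare_sub_le hE hE0 (g := id) (by simpa [hprod])
    (fun P hP => (irreducible_of_mem_primeFactors hP).natDegree_pos.ne') (by simpa [hprod])

end PrimeFactors

section FrobeniusOrbit

lemma iterate_eq_pow_smul {G R M : Type*} [Monoid R] [MulAction R M] [FunLike G M M]
    [MulActionHomClass G R M M] {σ : G} {θ : M} {ζ : R} (h : σ θ = ζ • θ) (n : ℕ) :
    σ^[n] θ = ζ ^ n • θ := by
  induction n with
  | zero => simp
  | succ n ih => rw [Function.iterate_succ_apply', ih, map_smul, h, smul_smul, pow_succ]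

lemma iterate_eq_add_nsmul {G M : Type*} [AddMonoid M] [FunLike G M M] [AddMonoidHomClass G M M]
    {σ : G} {θ b : M} (hθ : σ θ = θ + b) (hb : σ b = b) (n : ℕ) : σ^[n] θ = θ + n • b := by
  induction n with
  | zero => simp
  | succ n ih =>
    rw [Function.iterate_succ_apply', ih, map_add, map_nsmul, hθ, hb, succ_nsmul', add_assoc]

variable {F : Type*} [Field F] [Fintype F]

open FiniteField in
lemma natDegree_dvd_iff_iterate_frobenius_root {P : F[X]} [hP : Fact (Irreducible P)] {n : ℕ} :
    P.natDegree ∣ n ↔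
      (frobeniusAlgHom F (AdjoinRoot P))^[n] (AdjoinRoot.root P) = AdjoinRoot.root P := by
  rw [hP.out.natDegree_dvd_iff_dvd_X_pow_card_pow_sub_X, ← AdjoinRoot.mk_eq_zero, map_sub, map_pow,
    AdjoinRoot.mk_X, sub_eq_zero, coe_frobeniusAlgHom, pow_iterate, Nat.card_eq_fintype_card]

lemma frobenius_eq_smul_of_pow_add_smul_eq_zero {K : Type*} [Field K] [Algebra F K] {Q k : ℕ}
    (hQ : Q ≠ 0) (hk : k * (Q - 1) = Fintype.card F - 1) {a : F} {y : K}
    (hy : y ^ Q + a • y = 0) :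
    FiniteField.frobeniusAlgHom F K y = (-a) ^ k • y := by
  rcases eq_or_ne y 0 with rfl | hy0
  · simp
  have hpow : y ^ (Q - 1) = algebraMap F K (-a) := mul_right_cancel₀ hy0 <| by
    rw [← pow_succ, Nat.sub_add_cancel (Nat.one_le_iff_ne_zero.2 hQ), ← Algebra.smul_def, neg_smul]
    exact eq_neg_of_add_eq_zero_left hy
  have hcard : Fintype.card F = (Q - 1) * k + 1 := by
    have := Fintype.card_pos (α := F)
    rw [mul_comm, hk]
    omega
  rw [FiniteField.coe_frobeniusAlgHom]
  change y ^ Fintype.card F = _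
  rw [hcard, pow_succ, pow_mul, hpow, ← map_pow, ← Algebra.smul_def]

end FrobeniusOrbit

section ShortIntervalPoly

/-- The member `X ^ Q + a X + c` of the short interval around `X ^ Q`. -/
noncomputable def shortIntervalPoly {R : Type*} [Semiring R] (Q : ℕ) (a c : R) : R[X] :=
  X ^ Q + C a * X + C c

section Semiring

variable {R : Type*} [Semiring R] {Q : ℕ}

lemma degree_C_mul_X_add_C_lt (hQ : 1 < Q) (a c : R) : (C a * X + C c).degree < (Q : WithBot ℕ) :=
  degree_linear_le.trans_lt (Nat.one_lt_cast.2 hQ)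

lemma monic_shortIntervalPoly (hQ : 1 < Q) (a c : R) : (shortIntervalPoly Q a c).Monic := by
  rw [shortIntervalPoly, add_assoc]
  exact monic_X_pow_add (degree_C_mul_X_add_C_lt hQ a c)

lemma natDegree_shortIntervalPoly [Nontrivial R] (hQ : 1 < Q) (a c : R) :
    (shortIntervalPoly Q a c).natDegree = Q := by
  rw [shortIntervalPoly, add_assoc, natDegree_add_eq_left_of_degree_lt, natDegree_X_pow]
  simpa using degree_C_mul_X_add_C_lt hQ a c

end Semiring

variable {F : Type*} [Field F] (p : ℕ)

/-- The additive polynomial `X ^ p ^ j + a X` as an additive endomorphism of `F`: replacing `X` by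
`X + x` moves the constant term of `shortIntervalPoly (p ^ j) a c` by its value at `x`. -/
noncomputable def additivePolyHom [ExpChar F p] (j : ℕ) (a : F) : F →+ F :=
  (iterateFrobenius F p j).toAddMonoidHom + AddMonoidHom.mulLeft a

variable {p} {j : ℕ} {a c : F}

lemma additivePolyHom_apply [ExpChar F p] (x : F) :
    additivePolyHom p j a x = x ^ p ^ j + a * x := rfl

lemma mem_range_additivePolyHom [ExpChar F p] {y : F}
    (hy : (shortIntervalPoly (p ^ j) a c).IsRoot y) : c ∈ (additivePolyHom p j a).range := by
  refine ⟨-y, ?_⟩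
  rw [map_neg, additivePolyHom_apply, neg_eq_iff_add_eq_zero]
  simpa [shortIntervalPoly] using hy

lemma taylor_shortIntervalPoly [ExpChar F p] (x : F) :
    taylor x (shortIntervalPoly (p ^ j) a c) =
      shortIntervalPoly (p ^ j) a (c + additivePolyHom p j a x) := by
  simp only [shortIntervalPoly, additivePolyHom_apply, map_add, taylor_mul, taylor_pow, taylor_X,
    taylor_C, add_pow_expChar_pow, map_mul, map_pow]
  ring

lemma separable_shortIntervalPoly {Q : ℕ} (hQ : (Q : F) = 0) (ha : a ≠ 0) (c : F) :
    (shortIntervalPoly Q a c).Separable := by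
  simpa [shortIntervalPoly] using
    separable_C_mul_X_pow_add_C_mul_X_add_C 1 a c hQ ha.isUnit

end ShortIntervalPoly

section PrimeFactorDegrees

variable {F : Type*} [Field F] {P : F[X]} {a c : F}

lemma root_pow_add_smul_add_eq_zero {Q : ℕ} (hP : P ∣ shortIntervalPoly Q a c) :
    AdjoinRoot.root P ^ Q + a • AdjoinRoot.root P + algebraMap F (AdjoinRoot P) c = 0 := by
  simpa [shortIntervalPoly, Algebra.smul_def] using AdjoinRoot.mk_eq_zero.2 hP

variable [Fintype F] [DecidableEq F] {k : ℕ}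

lemma natDegree_eq_orderOf_of_mem_primeFactors {Q : ℕ} (hQ : Q ≠ 0)
    (hk : k * (Q - 1) = Fintype.card F - 1) (hP : P ∈ primeFactors (shortIntervalPoly Q a 0))
    (hPX : P ≠ X) : P.natDegree = orderOf ((-a) ^ k) := by
  have : Fact (Irreducible P) := ⟨irreducible_of_mem_primeFactors hP⟩
  have hθ : AdjoinRoot.root P ≠ 0 := fun h => hPX <|
    eq_of_monic_of_associated (monic_of_mem_primeFactors hP) monic_X <|
      this.out.associated_of_dvd irreducible_X (AdjoinRoot.mk_eq_zero.1 h)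
  have hσ := frobenius_eq_smul_of_pow_add_smul_eq_zero hQ hk <| by
    simpa using root_pow_add_smul_add_eq_zero (dvd_of_mem_primeFactors hP)
  refine eq_of_forall_dvd fun n => ?_
  rw [natDegree_dvd_iff_iterate_frobenius_root, iterate_eq_pow_smul hσ, orderOf_dvd_iff_pow_eq_one]
  exact ⟨fun h => smul_left_injective F hθ (by simpa using h), fun h => by rw [h, one_smul]⟩

lemma card_primeFactors_shortIntervalPoly_zero {Q : ℕ} (hQ : 1 < Q) (hQF : (Q : F) = 0)
    (ha : a ≠ 0) (hk : k * (Q - 1) = Fintype.card F - 1) :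
    (primeFactors (shortIntervalPoly Q a 0)).card = (Q - 1) / orderOf ((-a) ^ k) + 1 := by
  have hsq := (separable_shortIntervalPoly hQF ha 0).squarefree
  have hX : X ∈ primeFactors (shortIntervalPoly Q a 0) := by
    rw [mem_primeFactors, mem_normalizedFactors_iff' hsq.ne_zero]
    refine ⟨irreducible_X, monic_X.normalize_eq_self, ?_⟩
    exact X_dvd_iff.2 (by simp [shortIntervalPoly, coeff_X_pow, (zero_lt_one.trans hQ).ne])
  have hsum := sum_natDegree_primeFactors (monic_shortIntervalPoly hQ a 0) hsq
  rw [natDegree_shortIntervalPoly hQ, ← Finset.add_sum_erase _ _ hX, natDegree_X,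
    Finset.sum_congr rfl fun P hP => natDegree_eq_orderOf_of_mem_primeFactors hQ.ne_bot hk
      (Finset.mem_of_mem_erase hP) (Finset.ne_of_mem_erase hP), Finset.sum_const,
    smul_eq_mul] at hsum
  have hpos : 0 < orderOf ((-a) ^ k) := Nat.pos_of_ne_zero fun h => by simp [h] at hsum; omega
  rw [← Finset.card_erase_add_one hX]
  exact congrArg (· + 1) (Nat.eq_div_of_mul_eq_left hpos.ne' (by omega))

variable {p : ℕ} [Fact p.Prime] [CharP F p] {j : ℕ}

lemma natDegree_eq_char_of_mem_primeFactors (hk : k * (p ^ j - 1) = Fintype.card F - 1)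
    (hζ : (-a) ^ k = 1) (hc : c ∉ (additivePolyHom p j a).range)
    (hP : P ∈ primeFactors (shortIntervalPoly (p ^ j) a c)) : P.natDegree = p := by
  have : Fact (Irreducible P) := ⟨irreducible_of_mem_primeFactors hP⟩
  have : CharP (AdjoinRoot P) p := charP_of_injective_algebraMap' F p
  set θ := AdjoinRoot.root P
  set σ := FiniteField.frobeniusAlgHom F (AdjoinRoot P)
  have hθ := root_pow_add_smul_add_eq_zero (dvd_of_mem_primeFactors hP)
  have hσθ : σ θ ^ p ^ j + a • σ θ + algebraMap F (AdjoinRoot P) c = 0 := by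
    simpa only [map_add, map_pow, map_smul, σ.commutes, map_zero] using congrArg σ hθ
  have hb : σ (σ θ - θ) = σ θ - θ := by
    have h := frobenius_eq_smul_of_pow_add_smul_eq_zero (pow_ne_zero j (NeZero.ne p)) hk
      (a := a) (y := σ θ - θ) <| by
        rw [sub_pow_char_pow, smul_sub]
        linear_combination hσθ - hθ
    rwa [hζ, one_smul] at h
  have hb0 : σ θ - θ ≠ 0 := fun h => hc <| by
    have hdeg : P.natDegree = 1 := Nat.dvd_one.1 <|
      natDegree_dvd_iff_iterate_frobenius_root.2 (sub_eq_zero.1 h)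
    obtain ⟨y, hy⟩ := exists_root_of_degree_eq_one
      ((degree_eq_iff_natDegree_eq_of_pos one_pos).2 hdeg)
    exact mem_range_additivePolyHom (hy.dvd (dvd_of_mem_primeFactors hP))
  refine eq_of_forall_dvd fun n => ?_
  rw [natDegree_dvd_iff_iterate_frobenius_root,
    iterate_eq_add_nsmul (add_sub_cancel θ (σ θ)).symm hb, add_eq_left, nsmul_eq_mul,
    mul_eq_zero_iff_right hb0, CharP.cast_eq_zero_iff _ p]

lemma card_primeFactors_shortIntervalPoly_of_notMem_range (hj : j ≠ 0) (ha : a ≠ 0)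
    (hk : k * (p ^ j - 1) = Fintype.card F - 1) (hζ : (-a) ^ k = 1)
    (hc : c ∉ (additivePolyHom p j a).range) :
    (primeFactors (shortIntervalPoly (p ^ j) a c)).card = p ^ j / p := by
  have hp : p.Prime := Fact.out
  have hsum := sum_natDegree_primeFactors
    (monic_shortIntervalPoly (one_lt_pow₀ hp.one_lt hj) a c)
    (separable_shortIntervalPoly (by simp [hj]) ha c).squarefree
  rw [natDegree_shortIntervalPoly (one_lt_pow₀ hp.one_lt hj),
    Finset.sum_congr rfl fun P hP => natDegree_eq_char_of_mem_primeFactors hk hζ hc hP,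
    Finset.sum_const, smul_eq_mul] at hsum
  exact Nat.eq_div_of_mul_eq_left hp.ne_zero hsum

end PrimeFactorDegrees

section AdditivePolyHom

variable {F : Type*} [Field F] [Fintype F] {p j k : ℕ} [Fact p.Prime] [CharP F p] {a : F}

lemma splits_shortIntervalPoly_zero (hj : j ≠ 0) (ha : a ≠ 0)
    (hk : k * (p ^ j - 1) = Fintype.card F - 1) (hζ : (-a) ^ k = 1) :
    (shortIntervalPoly (p ^ j) a 0).Splits := by
  classical
  have hQ : 1 < p ^ j := one_lt_pow₀ (Fact.out : p.Prime).one_lt hj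
  rw [← prod_primeFactors_eq_self (monic_shortIntervalPoly hQ a 0)
    (separable_shortIntervalPoly (by simp [hj]) ha 0).squarefree]
  refine Splits.prod fun P hP => ?_
  rcases eq_or_ne P X with rfl | hPX
  · exact Splits.X
  · refine Splits.of_natDegree_eq_one ?_
    rw [natDegree_eq_orderOf_of_mem_primeFactors hQ.ne_bot hk hP hPX, hζ, orderOf_one]

lemma card_ker_additivePolyHom (hj : j ≠ 0) (ha : a ≠ 0)
    (hk : k * (p ^ j - 1) = Fintype.card F - 1) (hζ : (-a) ^ k = 1) :
    Nat.card (additivePolyHom p j a).ker = p ^ j := by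
  have hQ : 1 < p ^ j := one_lt_pow₀ (Fact.out : p.Prime).one_lt hj
  have hker : ((additivePolyHom p j a).ker : Set F) =
      (shortIntervalPoly (p ^ j) a 0).rootSet F := by
    ext y
    rw [mem_rootSet_of_ne (monic_shortIntervalPoly hQ a 0).ne_zero]
    simp [AddMonoidHom.mem_ker, additivePolyHom_apply, shortIntervalPoly]
  rw [← SetLike.coe_sort_coe, hker, Nat.card_eq_fintype_card,
    card_rootSet_eq_natDegree (separable_shortIntervalPoly (by simp [hj]) ha 0)
      (by simpa using splits_shortIntervalPoly_zero hj ha hk hζ), natDegree_shortIntervalPoly hQ]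

lemma range_additivePolyHom_eq_top (hk : k * (p ^ j - 1) = Fintype.card F - 1)
    (hζ : (-a) ^ k ≠ 1) : (additivePolyHom p j a).range = ⊤ := by
  refine AddMonoidHom.range_eq_top.2 (Finite.injective_iff_surjective.1 ?_)
  refine (injective_iff_map_eq_zero _).2 fun y hy => ?_
  have hfrob := frobenius_eq_smul_of_pow_add_smul_eq_zero (pow_ne_zero j (NeZero.ne p)) hk hy
  rw [FiniteField.coe_frobeniusAlgHom] at hfrob
  simp only [FiniteField.pow_card, smul_eq_mul] at hfrob
  by_contra hy0
  exact hζ (mul_right_cancel₀ hy0 (by rw [← hfrob, one_mul]))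

end AdditivePolyHom

section Translates

variable {G : Type*} [AddGroup G] (S : G → Prop)

lemma sum_card_add_eq_card_mul_card [Fintype G] (ℓ : G → G) :
    ∑ c, Nat.card {x // S (c + ℓ x)} = Nat.card G * Nat.card {c // S c} := by
  classical
  simp only [Nat.card_eq_fintype_card, Fintype.card_subtype, Finset.card_filter]
  have htranslate (x : G) : (∑ c, if S (c + ℓ x) then 1 else 0) = ∑ c, if S c then 1 else 0 :=
    Equiv.sum_comp (Equiv.addRight (ℓ x)) fun c => if S c then 1 else 0
  rw [Finset.sum_comm, Finset.sum_congr rfl fun x _ => htranslate x]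
  simp

lemma card_add_eq_card_of_mem_range {ℓ : G →+ G} {c : G} (hc : c ∈ ℓ.range) :
    Nat.card {x // S (c + ℓ x)} = Nat.card {x // S (0 + ℓ x)} := by
  obtain ⟨y, rfl⟩ := hc
  exact Nat.card_congr ((Equiv.addLeft y).subtypeEquiv fun x => by simp)

end Translates

section Density

lemma sum_ite_eq_card_mul_add {α R : Type*} [Fintype α] [NonAssocRing R] (S : α → Prop)
    [DecidablePred S] (x y : R) :
    ∑ i, (if S i then x else y) =
      Nat.card {i // S i} * x + (Fintype.card α - Nat.card {i // S i}) * y := by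
  have hcompl := Finset.card_filter_add_card_filter_not (s := Finset.univ) S
  rw [Finset.card_univ] at hcompl
  rw [Finset.sum_ite, Finset.sum_const, Finset.sum_const, nsmul_eq_mul, nsmul_eq_mul,
    Nat.card_eq_fintype_card, Fintype.card_subtype, ← hcompl, Nat.cast_add, add_sub_cancel_left]

/-- The limiting density of sums of two squares among the polynomials `X ^ Q + a X + c`, `c ∈ F_q`,
where `Q` is a power of `p` and `(-a) ^ ((q - 1) / (Q - 1))` has order `d`. -/
noncomputable def sliceDensity (p Q d : ℕ) : ℝ :=
  if d = 1 then 1 / Q * (1 / 2 ^ Q) + (1 - 1 / Q) * (1 / 2 ^ (Q / p))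
  else 1 / 2 ^ ((Q - 1) / d + 1)

variable {F : Type*} [Field F] [Fintype F] [DecidableEq F] {p j k : ℕ} [Fact p.Prime] [CharP F p]
  {a : F} {E : ℝ}

lemma abs_card_translates_sub_le (hp : Odd p) (hj : j ≠ 0) (ha : a ≠ 0)
    (hE : HasCharSumBound F (p ^ j) E) (hE0 : 0 ≤ E) (c : F) :
    |(Nat.card {x // IsSumOfTwoSquares
        (shortIntervalPoly (p ^ j) a (c + additivePolyHom p j a x))} : ℝ) -
      Fintype.card F / 2 ^ (primeFactors (shortIntervalPoly (p ^ j) a c)).card| ≤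
      E + (p ^ j : ℕ) := by
  have hQ : 1 < p ^ j := one_lt_pow₀ (Fact.out : p.Prime).one_lt hj
  simp only [← taylor_shortIntervalPoly]
  exact abs_card_isSumOfTwoSquares_taylor_sub_le (ringChar_ne_two hp) hE hE0
    (monic_shortIntervalPoly hQ a c) (separable_shortIntervalPoly (by simp [hj]) ha c).squarefree
    (natDegree_shortIntervalPoly hQ a c).le

lemma abs_card_translates_sub_ite_le (hp : Odd p) (hj : j ≠ 0) (ha : a ≠ 0)
    (hk : k * (p ^ j - 1) = Fintype.card F - 1) (hE : HasCharSumBound F (p ^ j) E) (hE0 : 0 ≤ E)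
    (c : F) :
    |(Nat.card {x // IsSumOfTwoSquares
        (shortIntervalPoly (p ^ j) a (c + additivePolyHom p j a x))} : ℝ) -
      Fintype.card F * (if c ∈ (additivePolyHom p j a).range then
        1 / 2 ^ ((p ^ j - 1) / orderOf ((-a) ^ k) + 1) else 1 / 2 ^ (p ^ j / p))| ≤
      E + (p ^ j : ℕ) := by
  have hQ : 1 < p ^ j := one_lt_pow₀ (Fact.out : p.Prime).one_lt hj
  split_ifs with hc
  · rw [card_add_eq_card_of_mem_range (fun c => IsSumOfTwoSquares (shortIntervalPoly _ a c)) hc,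
      ← card_primeFactors_shortIntervalPoly_zero hQ (by simp [hj]) ha hk, mul_one_div]
    exact abs_card_translates_sub_le hp hj ha hE hE0 0
  · have hζ : (-a) ^ k = 1 := by
      by_contra hζ
      simp [range_additivePolyHom_eq_top hk hζ] at hc
    rw [← card_primeFactors_shortIntervalPoly_of_notMem_range hj ha hk hζ hc, mul_one_div]
    exact abs_card_translates_sub_le hp hj ha hE hE0 c

lemma sum_ite_mem_range_eq_card_mul_sliceDensity (hj : j ≠ 0) (ha : a ≠ 0)
    (hk : k * (p ^ j - 1) = Fintype.card F - 1) :
    ∑ c : F, (if c ∈ (additivePolyHom p j a).range then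
        1 / 2 ^ ((p ^ j - 1) / orderOf ((-a) ^ k) + 1) else 1 / 2 ^ (p ^ j / p)) =
      Fintype.card F * sliceDensity p (p ^ j) (orderOf ((-a) ^ k)) := by
  by_cases hζ : (-a) ^ k = 1
  · have hcard : (p ^ j : ℝ) * Nat.card (additivePolyHom p j a).range = Fintype.card F := by
      rw [← AddSubgroup.index_ker, ← Nat.card_eq_fintype_card,
        ← AddSubgroup.card_mul_index (additivePolyHom p j a).ker,
        card_ker_additivePolyHom hj ha hk hζ]
      push_cast
      rfl
    have hp0 : (p : ℝ) ≠ 0 := Nat.cast_ne_zero.2 (NeZero.ne p)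
    rw [sum_ite_eq_card_mul_add, hζ, orderOf_one, Nat.div_one,
      Nat.sub_add_cancel (Nat.one_le_iff_ne_zero.2 (pow_ne_zero j (NeZero.ne p))), sliceDensity,
      if_pos rfl, ← hcard]
    push_cast
    field_simp
  · rw [sliceDensity, if_neg (mt orderOf_eq_one_iff.1 hζ)]
    simp [range_additivePolyHom_eq_top hk hζ]

lemma abs_card_slice_sub_le (hp : Odd p) (hj : j ≠ 0) (ha : a ≠ 0)
    (hk : k * (p ^ j - 1) = Fintype.card F - 1) (hE : HasCharSumBound F (p ^ j) E) (hE0 : 0 ≤ E) :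
    |(Nat.card {c : F // IsSumOfTwoSquares (shortIntervalPoly (p ^ j) a c)} : ℝ) -
      Fintype.card F * sliceDensity p (p ^ j) (orderOf ((-a) ^ k))| ≤ E + (p ^ j : ℕ) := by
  have hq : (0 : ℝ) < Fintype.card F := Nat.cast_pos.2 Fintype.card_pos
  have hN := sum_card_add_eq_card_mul_card
    (fun c => IsSumOfTwoSquares (shortIntervalPoly (p ^ j) a c)) (additivePolyHom p j a)
  rw [Nat.card_eq_fintype_card] at hN
  refine le_of_mul_le_mul_left ?_ hq
  calc _ = |∑ c : F, ((Nat.card {x // IsSumOfTwoSquares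
        (shortIntervalPoly (p ^ j) a (c + additivePolyHom p j a x))} : ℝ) -
          Fintype.card F * (if c ∈ (additivePolyHom p j a).range then
            1 / 2 ^ ((p ^ j - 1) / orderOf ((-a) ^ k) + 1) else 1 / 2 ^ (p ^ j / p)))| := by
        rw [Finset.sum_sub_distrib, ← Finset.mul_sum,
          sum_ite_mem_range_eq_card_mul_sliceDensity hj ha hk, ← Nat.cast_sum, hN, Nat.cast_mul,
          ← mul_sub, abs_mul, abs_of_pos hq]
    _ ≤ ∑ _c : F, (E + (p ^ j : ℕ)) := (Finset.abs_sum_le_sum_abs _ _).trans <|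
        Finset.sum_le_sum fun c _ => abs_card_translates_sub_ite_le hp hj ha hk hE hE0 c
    _ = _ := by rw [Finset.sum_const, Finset.card_univ, nsmul_eq_mul]

end Density

section CyclicSums

lemma sum_comp_eq_card_ker_mul_sum {G H R : Type*} [Group G] [Group H] [Fintype G] [Fintype H]
    [NonAssocSemiring R] {φ : G →* H} (hφ : Function.Surjective φ) (f : H → R) :
    ∑ g, f (φ g) = Nat.card φ.ker * ∑ h, f h := by
  classical
  have hfiber (h : H) : (Finset.univ.filter fun g => φ g = h).card = Nat.card φ.ker := by
    rw [MonoidHom.card_fiber_eq_of_mem_range φ (hφ h) (hφ 1), ← Fintype.card_subtype,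
      ← Nat.card_eq_fintype_card]
    rfl
  rw [← Finset.sum_fiberwise Finset.univ φ, Finset.mul_sum]
  refine Finset.sum_congr rfl fun h _ => ?_
  rw [Finset.sum_congr rfl fun g hg => congrArg f (Finset.mem_filter.1 hg).2, Finset.sum_const,
    hfiber, nsmul_eq_mul]

lemma sum_comp_orderOf {H R : Type*} [Group H] [IsCyclic H] [Fintype H] [NonAssocSemiring R]
    (f : ℕ → R) :
    ∑ h : H, f (orderOf h) = ∑ d ∈ (Nat.card H).divisors, Nat.totient d * f d := by
  classical
  rw [← Finset.sum_fiberwise_of_maps_to (t := (Nat.card H).divisors) (g := orderOf) fun h _ =>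
    Nat.mem_divisors.2 ⟨orderOf_dvd_natCard h, Nat.card_pos.ne'⟩]
  refine Finset.sum_congr rfl fun d hd => ?_
  rw [Finset.sum_congr rfl fun h hh => congrArg f (Finset.mem_filter.1 hh).2, Finset.sum_const,
    IsCyclic.card_orderOf_eq_totient
      (Nat.card_eq_fintype_card (α := H) ▸ Nat.dvd_of_mem_divisors hd), nsmul_eq_mul]

lemma sum_orderOf_pow {G R : Type*} [CommGroup G] [IsCyclic G] [Fintype G] [NonAssocSemiring R]
    {k n : ℕ} (hkn : k * n = Nat.card G) (f : ℕ → R) :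
    ∑ g : G, f (orderOf (g ^ k)) = k * ∑ d ∈ n.divisors, Nat.totient d * f d := by
  have := Fintype.ofFinite (powMonoidHom k : G →* G).range
  have hker : Nat.card (powMonoidHom k : G →* G).ker = k := by
    rw [IsCyclic.card_powMonoidHom_ker, ← hkn, Nat.gcd_eq_right (dvd_mul_right k n)]
  have hk : 0 < k := Nat.pos_of_ne_zero fun h => Nat.card_pos.ne' (by rw [← hkn, h, zero_mul])
  have hrange : Nat.card (powMonoidHom k : G →* G).range = n := by
    rw [IsCyclic.card_powMonoidHom_range, ← hkn, Nat.gcd_eq_right (dvd_mul_right k n),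
      Nat.mul_div_cancel_left n hk]
  have hsum := sum_comp_eq_card_ker_mul_sum (powMonoidHom k : G →* G).rangeRestrict_surjective
    fun h => f (orderOf h)
  rw [sum_comp_orderOf, MonoidHom.ker_rangeRestrict, hker, hrange] at hsum
  simpa [← Subgroup.orderOf_coe] using hsum

end CyclicSums

section Constant

/-- The limiting density of sums of two squares in the short interval
`{X ^ Q + a X + c : a, c ∈ F_q}`, where `Q` is a power of `p` and `F_q` grows through the finite
extensions of `F_Q`. -/
noncomputable def shortIntervalConstant (p Q : ℕ) : ℝ :=
  1 / (2 ^ Q * Q * (Q - 1)) + 1 / (2 ^ (Q / p) * Q) +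
    1 / (2 ^ Q * (Q - 1)) *
      ∑ d ∈ (Q - 1).divisors.erase 1,
        (2 : ℝ) ^ ((Q - 1) * (d - 1) / d) * Nat.totient d

lemma sliceDensity_one (p Q : ℕ) :
    sliceDensity p Q 1 = 1 / Q * (1 / 2 ^ Q) + (1 - 1 / Q) * (1 / 2 ^ (Q / p)) :=
  if_pos rfl

lemma sliceDensity_of_ne_one {p Q d : ℕ} (hQ : 1 < Q) (hd : d ∣ Q - 1) (hd1 : d ≠ 1) :
    sliceDensity p Q d = 1 / 2 ^ Q * 2 ^ ((Q - 1) * (d - 1) / d) := by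
  obtain ⟨m, hm⟩ := hd
  have hd0 : 0 < d := Nat.pos_of_ne_zero fun h => by simp [h] at hm; omega
  have hexp : m + 1 + m * (d - 1) = Q := by
    have : m + m * (d - 1) = d * m := by
      rw [add_comm, ← Nat.mul_succ, Nat.succ_eq_add_one, Nat.sub_add_cancel hd0, mul_comm]
    omega
  rw [sliceDensity, if_neg hd1, hm, Nat.mul_div_cancel_left m hd0, mul_assoc,
    Nat.mul_div_cancel_left _ hd0, ← hexp, pow_add 2 (m + 1)]
  field_simp

lemma sum_totient_mul_sliceDensity (p : ℕ) {Q : ℕ} (hQ : 1 < Q) :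
    ∑ d ∈ (Q - 1).divisors, Nat.totient d * sliceDensity p Q d =
      (Q - 1) * shortIntervalConstant p Q := by
  have hQ1 : (Q : ℝ) - 1 ≠ 0 := (sub_pos.2 (Nat.one_lt_cast.2 hQ)).ne'
  have hQ0 : (Q : ℝ) ≠ 0 := Nat.cast_ne_zero.2 hQ.ne_bot
  have hterm : ∑ d ∈ (Q - 1).divisors.erase 1, Nat.totient d * sliceDensity p Q d =
      1 / 2 ^ Q * ∑ d ∈ (Q - 1).divisors.erase 1,
        (2 : ℝ) ^ ((Q - 1) * (d - 1) / d) * Nat.totient d := by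
    rw [Finset.mul_sum]
    refine Finset.sum_congr rfl fun d hd => ?_
    obtain ⟨hd1, hd⟩ := Finset.mem_erase.1 hd
    rw [sliceDensity_of_ne_one hQ (Nat.dvd_of_mem_divisors hd) hd1]
    ring
  rw [← Finset.add_sum_erase _ _ (Nat.one_mem_divisors.2 (Nat.sub_ne_zero_of_lt hQ)), hterm,
    Nat.totient_one, Nat.cast_one, one_mul, sliceDensity_one, shortIntervalConstant]
  field_simp

end Constant

section Average

variable {F : Type*} [Field F] [Fintype F] [DecidableEq F] {p j k : ℕ}

lemma sum_units_sliceDensity {Q : ℕ} (hQ : 1 < Q) (hk : k * (Q - 1) = Fintype.card F - 1) :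
    ∑ u : Fˣ, sliceDensity p Q (orderOf ((u : F) ^ k)) =
      (Fintype.card F - 1) * shortIntervalConstant p Q := by
  classical
  have hk' : k * (Q - 1) = Nat.card Fˣ := by
    rw [hk, Nat.card_eq_fintype_card, Fintype.card_units]
  have hkR : (k : ℝ) * (Q - 1) = Fintype.card F - 1 := by
    rw [← Nat.cast_pred (zero_lt_one.trans hQ), ← Nat.cast_pred Fintype.card_pos, ← hk,
      Nat.cast_mul]
  simp only [← Units.val_pow_eq_pow_val, orderOf_units]
  rw [sum_orderOf_pow hk', sum_totient_mul_sliceDensity p hQ, ← mul_assoc, hkR]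

variable [Fact p.Prime] [CharP F p] {E : ℝ}

lemma card_pairs_eq_add_sum_units (S : F → F → Prop) :
    Nat.card {x : F × F // S x.2 x.1} =
      Nat.card {c // S 0 c} + ∑ u : Fˣ, Nat.card {c // S (-u) c} := by
  have hfiber : Nat.card {x : F × F // S x.2 x.1} = ∑ a, Nat.card {c // S a c} := by
    classical
    simp only [Nat.card_eq_fintype_card, Fintype.card_subtype, Finset.card_filter]
    exact Fintype.sum_prod_type_right _
  rw [hfiber, Fintype.sum_eq_add_sum_subtype_ne _ 0,
    ← Equiv.sum_comp (unitsEquivNeZero (G₀ := F)), ← Equiv.sum_comp (Equiv.neg Fˣ)]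
  simp

lemma abs_card_pairs_sub_le (hp : Odd p) (hj : j ≠ 0)
    (hk : k * (p ^ j - 1) = Fintype.card F - 1) (hE : HasCharSumBound F (p ^ j) E) (hE0 : 0 ≤ E) :
    |(Nat.card {x : F × F // IsSumOfTwoSquares (shortIntervalPoly (p ^ j) x.2 x.1)} : ℝ) -
      Fintype.card F * ((Fintype.card F - 1) * shortIntervalConstant p (p ^ j))| ≤
      Fintype.card F * (1 + E + (p ^ j : ℕ)) := by
  have hQ : 1 < p ^ j := one_lt_pow₀ (Fact.out : p.Prime).one_lt hj
  set q := (Fintype.card F : ℝ)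
  let N (a : F) : ℝ := Nat.card {c : F // IsSumOfTwoSquares (shortIntervalPoly (p ^ j) a c)}
  have hzero : |N 0| ≤ q := by
    rw [abs_of_nonneg (Nat.cast_nonneg _)]
    exact Nat.cast_le.2 ((Finite.card_subtype_le _).trans_eq Nat.card_eq_fintype_card)
  have hunits (u : Fˣ) : |N (-u) - q * sliceDensity p (p ^ j) (orderOf ((u : F) ^ k))| ≤
      E + (p ^ j : ℕ) := by
    simpa only [neg_neg] using abs_card_slice_sub_le hp hj (neg_ne_zero.2 u.ne_zero) hk hE hE0
  calc _ = |N 0 + ∑ u : Fˣ, (N (-u) - q * sliceDensity p (p ^ j) (orderOf ((u : F) ^ k)))| := by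
        rw [card_pairs_eq_add_sum_units fun a c =>
            IsSumOfTwoSquares (shortIntervalPoly (p ^ j) a c),
          Finset.sum_sub_distrib, ← Finset.mul_sum, sum_units_sliceDensity hQ hk]
        push_cast
        rw [add_sub_assoc]
    _ ≤ q + ∑ _u : Fˣ, (E + (p ^ j : ℕ)) := (abs_add_le _ _).trans <| add_le_add hzero <|
        (Finset.abs_sum_le_sum_abs _ _).trans <| Finset.sum_le_sum fun u _ => hunits u
    _ ≤ q + q * (E + (p ^ j : ℕ)) := by
        rw [Finset.sum_const, Finset.card_univ, nsmul_eq_mul]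
        gcongr
        exact Nat.cast_le.2 (Fintype.card_le_of_injective ((↑) : Fˣ → F) Units.val_injective)
    _ = _ := by ring

lemma abs_card_pairs_div_sub_le (hp : Odd p) (hj : j ≠ 0)
    (hk : k * (p ^ j - 1) = Fintype.card F - 1) {ε : ℝ} (hε : 0 ≤ ε)
    (hE : HasCharSumBound F (p ^ j) (ε * Fintype.card F)) :
    |(Nat.card {x : F × F // IsSumOfTwoSquares (shortIntervalPoly (p ^ j) x.2 x.1)} : ℝ) /
        (Fintype.card F : ℝ) ^ 2 - shortIntervalConstant p (p ^ j)| ≤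
      ε + (1 + (p ^ j : ℕ) + |shortIntervalConstant p (p ^ j)|) / Fintype.card F := by
  have hbound := abs_card_pairs_sub_le hp hj hk hE (by positivity)
  have hq : (0 : ℝ) < Fintype.card F := Nat.cast_pos.2 Fintype.card_pos
  set q := (Fintype.card F : ℝ)
  set N := (Nat.card _ : ℝ)
  set c := shortIntervalConstant p (p ^ j)
  have hsplit : N / q ^ 2 - c = ((N - q * ((q - 1) * c)) - q * c) / q ^ 2 := by
    field_simp
    ring
  rw [hsplit, abs_div, abs_of_pos (pow_pos hq 2), div_le_iff₀ (pow_pos hq 2)]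
  calc _ ≤ |N - q * ((q - 1) * c)| + |q * c| := abs_sub _ _
    _ ≤ q * (1 + ε * q + (p ^ j : ℕ)) + q * |c| := by
        rw [abs_mul, abs_of_pos hq]
        gcongr
    _ = _ := by
        field_simp
        ring

end Average

lemma shortIntervalConstant_sq {p : ℕ} (hp : p ≠ 0) :
    shortIntervalConstant p (p ^ 2) = landauShortIntervalConstant p := by
  have hdiv : p ^ 2 / p = p := by rw [sq, Nat.mul_div_cancel_left p (Nat.pos_of_ne_zero hp)]
  rw [shortIntervalConstant, landauShortIntervalConstant, hdiv, Nat.cast_pow]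

end ShortInterval

open Filter ShortInterval in
theorem density_in_short_interval_tendsto_general
    (p j : ℕ) [Fact p.Prime] (hodd : Odd p) (hj : j ≠ 0) :
    Tendsto
      (fun ν : ℕ =>
        (Nat.card {x : GaloisField p (j * ν) × GaloisField p (j * ν) //
            IsSumOfTwoSquares (shortIntervalPoly (p ^ j) x.2 x.1)} : ℝ) /
          ((p : ℝ) ^ (j * ν)) ^ 2)
      atTop (nhds (shortIntervalConstant p (p ^ j))) := by
  classical
  have hp1 : (1 : ℝ) < p := Nat.one_lt_cast.2 (Fact.out : p.Prime).one_lt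
  have hjν : Tendsto (j * ·) atTop atTop := tendsto_id.const_mul_atTop' (Nat.pos_of_ne_zero hj)
  refine Metric.tendsto_nhds.2 fun ε hε => ?_
  obtain ⟨n₀, hn₀⟩ := exists_forall_hasCharSumBound p hodd (p ^ j) (half_pos hε)
  have hsmall : ∀ᶠ ν in atTop,
      (1 + (p ^ j : ℕ) + |shortIntervalConstant p (p ^ j)|) / (p : ℝ) ^ (j * ν) < ε / 2 :=
    (tendsto_const_nhds.div_atTop ((tendsto_pow_atTop_atTop_of_one_lt hp1).comp hjν)).eventually
      (gt_mem_nhds (half_pos hε))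
  filter_upwards [hsmall, hjν.eventually_ge_atTop n₀, eventually_ne_atTop 0] with ν hν hn hν0
  have := Fintype.ofFinite (GaloisField p (j * ν))
  have hcard : Fintype.card (GaloisField p (j * ν)) = p ^ (j * ν) := by
    rw [← Nat.card_eq_fintype_card, GaloisField.card p _ (mul_ne_zero hj hν0)]
  obtain ⟨k, hk⟩ := Nat.pow_sub_one_dvd_pow_sub_one p (dvd_mul_right j ν)
  have hbound := abs_card_pairs_div_sub_le hodd hj (by rw [hcard, hk, mul_comm])
    (half_pos hε).le (by simpa [hcard] using hn₀ _ hn _ hcard)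
  rw [hcard, Nat.cast_pow] at hbound
  exact (hbound.trans_lt (add_lt_add_right hν _)).trans_eq (add_halves ε)

/-- For `p` an odd prime, `q = p^(2ν)` and `f₀ = T^(p²)`, the density of sums of two
squares in the short interval `{T^(p²) + a₁T + a₀ : a₀, a₁ ∈ F_q}` converges to `c_p` as
`ν → ∞`. -/
theorem density_in_short_interval_tendsto
    (p : ℕ) [Fact p.Prime] (hodd : Odd p) :
    Filter.Tendsto
      (fun ν : ℕ =>
        (Nat.card {x : GaloisField p (2 * ν) × GaloisField p (2 * ν) //
            ∃ A B : Polynomial (GaloisField p (2 * ν)),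
              Polynomial.X ^ (p ^ 2) + Polynomial.C x.2 * Polynomial.X +
                  Polynomial.C x.1 =
                A ^ 2 + Polynomial.X * B ^ 2} : ℝ) / ((p : ℝ) ^ (2 * ν)) ^ 2)
      Filter.atTop (nhds (landauShortIntervalConstant p)) := by
  rw [← ShortInterval.shortIntervalConstant_sq (NeZero.ne p)]
  exact density_in_short_interval_tendsto_general p 2 hodd two_ne_zero
end

section
/- Let q be an odd prime power and let k ≥ 1 be an integer. For a ∈ F_q, the polynomial T^{2k+1} + a ∈ F_q[T] is a sum of two squares if and only if a is a square in F_q. -/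
section

open Polynomial

variable {R : Type*} [Semiring R]

theorem isSquare_coeff_zero_sq_add_X_mul (A G : R[X]) :
    IsSquare ((A ^ 2 + X * G).coeff 0) :=
  ⟨A.coeff 0, by simp only [coeff_add, sq, mul_coeff_zero, coeff_X_zero, zero_mul, add_zero]⟩

theorem X_pow_add_C_sum_of_two_squares_iff_general (g : R[X]) (a : R) :
    (∃ A B : R[X], X * g ^ 2 + C a = A ^ 2 + X * B ^ 2) ↔ IsSquare a := by
  constructor
  · rintro ⟨A, B, h⟩
    have coeff_zero_eq : (A ^ 2 + X * B ^ 2).coeff 0 = a := by simp [← h]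
    exact coeff_zero_eq ▸ isSquare_coeff_zero_sq_add_X_mul A (B ^ 2)
  · rintro ⟨c, rfl⟩
    exact ⟨C c, g, by rw [C_mul, ← sq, add_comm]⟩

end

/-- For `q` odd and `k ≥ 1`, the polynomial `T^(2k+1) + a ∈ F_q[T]` is a sum of two
squares (`A² + T·B²`) if and only if `a` is a square in `F_q`. -/
theorem X_pow_add_C_sum_of_two_squares_iff
    (F : Type) [Field F] [Fintype F] (hodd : Odd (Fintype.card F))
    (k : ℕ) (hk : 1 ≤ k) (a : F) :
    (∃ A B : Polynomial F,
        Polynomial.X ^ (2 * k + 1) + Polynomial.C a =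
          A ^ 2 + Polynomial.X * B ^ 2) ↔ IsSquare a := by
  rw [pow_succ', mul_comm 2 k, pow_mul]
  exact X_pow_add_C_sum_of_two_squares_iff_general (Polynomial.X ^ k) a
end

section
/- Let q be an odd prime power and let k ≥ 1 be an integer. Then the number of elements a ∈ F_q such that T^{2k+1} + a is a sum of two squares equals (q + 1)/2. -/
/-! Setting `T = 0` turns `A ^ n + T * B ^ n` into an `n`-th power in the base ring. Conversely
`T * g ^ n + b ^ n` already has this shape, so `T * g ^ n + a` does exactly when `a` is an `n`-th
power. In a finite field the nonzero `n`-th powers are counted through the cyclic unit group. -/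

open Polynomial

lemma exists_X_mul_pow_add_C_eq_pow_add_X_mul_pow_iff {R : Type*} [Semiring R] (n : ℕ)
    (g : R[X]) (a : R) :
    (∃ A B : R[X], X * g ^ n + C a = A ^ n + X * B ^ n) ↔ ∃ b : R, b ^ n = a := by
  constructor
  · rintro ⟨A, B, h⟩
    have constantCoeff_eq : a = constantCoeff A ^ n := by
      rw [← map_pow]
      simpa using congrArg constantCoeff h
    exact ⟨constantCoeff A, constantCoeff_eq.symm⟩
  · rintro ⟨b, rfl⟩
    exact ⟨C b, g, by rw [C_pow, add_comm]⟩

lemma range_pow_eq_insert_zero_image_range_powMonoidHom {G₀ : Type*} [CommGroupWithZero G₀] {n : ℕ}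
    (hn : n ≠ 0) :
    Set.range (fun b : G₀ ↦ b ^ n) =
      insert 0 (Units.val '' ((powMonoidHom n : G₀ˣ →* G₀ˣ).range : Set G₀ˣ)) := by
  ext a
  constructor
  · rintro ⟨b, rfl⟩
    obtain rfl | hb := eq_or_ne b 0
    · exact Or.inl (zero_pow hn)
    · exact Or.inr ⟨Units.mk0 b hb ^ n, ⟨Units.mk0 b hb, rfl⟩, rfl⟩
  · rintro (rfl | ⟨_, ⟨u, rfl⟩, rfl⟩)
    · exact ⟨0, zero_pow hn⟩
    · exact ⟨u, rfl⟩

lemma card_range_pow {G₀ : Type*} [CommGroupWithZero G₀] [Finite G₀] [IsCyclic G₀ˣ] {n : ℕ}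
    (hn : n ≠ 0) :
    Nat.card (Set.range fun b : G₀ ↦ b ^ n) =
      (Nat.card G₀ - 1) / (Nat.card G₀ - 1).gcd n + 1 := by
  have zero_notMem :
      (0 : G₀) ∉ Units.val '' ((powMonoidHom n : G₀ˣ →* G₀ˣ).range : Set G₀ˣ) := by
    rintro ⟨u, -, hu⟩
    exact u.ne_zero hu
  rw [range_pow_eq_insert_zero_image_range_powMonoidHom hn, Nat.card_coe_set_eq,
    Set.ncard_insert_of_notMem zero_notMem, Set.ncard_image_of_injective _ Units.val_injective,
    ← Nat.card_coe_set_eq, ← Nat.card_units]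
  exact congrArg (· + 1) (IsCyclic.card_powMonoidHom_range G₀ˣ n)

theorem card_X_pow_add_C_sum_of_two_squares_general {F : Type*} [Field F] [Finite F] {n : ℕ}
    (hn : n ≠ 0) (k : ℕ) :
    Nat.card {a : F // ∃ A B : F[X], X ^ (n * k + 1) + C a = A ^ n + X * B ^ n} =
      (Nat.card F - 1) / (Nat.card F - 1).gcd n + 1 := by
  have X_pow_eq : (X : F[X]) ^ (n * k + 1) = X * (X ^ k) ^ n := by ring
  simp only [X_pow_eq, exists_X_mul_pow_add_C_eq_pow_add_X_mul_pow_iff]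
  exact card_range_pow hn

/-- For `q` odd and `k ≥ 1`, the number of `a ∈ F_q` such that `T^(2k+1) + a` is a sum of
two squares (`A² + T·B²`) equals `(q + 1)/2`. -/
theorem card_X_pow_add_C_sum_of_two_squares
    (F : Type) [Field F] [Fintype F] (hodd : Odd (Fintype.card F))
    (k : ℕ) (hk : 1 ≤ k) :
    Nat.card {a : F // ∃ A B : Polynomial F,
        Polynomial.X ^ (2 * k + 1) + Polynomial.C a =
          A ^ 2 + Polynomial.X * B ^ 2} = (Fintype.card F + 1) / 2 := by
  obtain ⟨m, hm⟩ := hodd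
  rw [card_X_pow_add_C_sum_of_two_squares_general two_ne_zero, Nat.card_eq_fintype_card, hm,
    Nat.add_sub_cancel, Nat.gcd_mul_right_left]
  omega
end

section
/- Let p be an odd prime and let k be the finite field with p² elements. Consider the F₂-vector space V of all functions k → F₂, with the group of affine transformations acting by (σ_{a,b} · ξ)(x) = ξ(ax + b) for a ∈ k^×, b ∈ k. The only subspaces of V invariant under all these transformations are: the zero subspace, the span of the constant function 1, the subspace of all ξ with ∑_{x ∈ k} ξ(x) = 0, and V itself. -/
/-!
Let `ξ ∈ U` be nonconstant and put `q = |k|`. For `x ≠ 0` the points `a * x + b` with `a ≠ 0` run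
once through `k` without `b`, so the sum of all the functions `x ↦ ξ (a * x + b)` with `a ≠ 0` is
constant away from `0`; it is not constant at `0` as soon as `q * ξ b ≠ ∑ y, ξ y`, and such a `b`
exists because `q` is invertible in the coefficients. After rescaling and translating, `U` contains
`c + δ_z` for a fixed `c` and all points `z`. A function `f` of sum zero equals
`∑ z, f z • (c + δ_z)`, so `U` contains the hyperplane of such functions. If instead `U` has no
nonconstant element, it lies in the line of constant functions.
-/

section Functions

variable {ι F : Type*}

lemma le_span_one_of_forall_apply_eq [Semiring F] {U : Submodule F (ι → F)}
    (hU : ∀ ξ ∈ U, ∀ x y, ξ x = ξ y) : U ≤ Submodule.span F {(fun _ => 1 : ι → F)} := by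
  intro ξ hξ
  rcases isEmpty_or_nonempty ι with _ | ⟨⟨i⟩⟩
  · simp [Subsingleton.elim ξ 0]
  · refine Submodule.mem_span_singleton.2 ⟨ξ i, funext fun x => ?_⟩
    simpa using hU ξ hξ i x

lemma ker_sum_proj_le_of_const_add_single_mem [Fintype ι] [DecidableEq ι] [Semiring F]
    {U : Submodule F (ι → F)} (c : F) (hc : ∀ i, (fun _ => c) + Pi.single i 1 ∈ U) :
    LinearMap.ker (∑ i, LinearMap.proj (R := F) (φ := fun _ : ι => F) i) ≤ U := by
  intro f hf
  have hsum : ∑ i, f i = 0 := by simpa using hf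
  have hf_eq : f = ∑ i, f i • ((fun _ => c) + Pi.single i 1 : ι → F) := by
    ext x
    simp [Pi.single_apply, Finset.sum_add_distrib, ← Finset.sum_mul, hsum]
  rw [hf_eq]
  exact U.sum_mem fun i _ => U.smul_mem _ (hc i)

lemma isCoatom_ker_sum_proj [Fintype ι] [Nonempty ι] [DivisionRing F] :
    IsCoatom (LinearMap.ker (∑ i, LinearMap.proj (R := F) (φ := fun _ : ι => F) i)) := by
  classical
  refine LinearMap.isCoatom_ker_of_surjective fun r => ?_
  exact ⟨Pi.single (Classical.arbitrary ι) r, by simp⟩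

end Functions

section Affine

variable {k F : Type*} [Field k] [Fintype k]

lemma sum_apply_mul_add [DecidableEq k] {M : Type*} [AddCommGroup M] (ξ : k → M) (b x : k) :
    ∑ a, ξ (a * x + b) =
      ∑ y, ξ y + (Pi.single 0 (Fintype.card k • ξ b - ∑ y, ξ y) : k → M) x := by
  rcases eq_or_ne x 0 with rfl | hx
  · simp
  · simpa [hx] using ((Equiv.mulRight₀ x hx).trans (Equiv.addRight b)).sum_comp ξ

lemma const_add_single_mem_of_affine_invariant [DecidableEq k] [Ring F]
    {U : Submodule F (k → F)}
    (hU : ∀ (a : k) (b : k), a ≠ 0 → ∀ ξ ∈ U, (fun x => ξ (a * x + b)) ∈ U)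
    {ξ : k → F} (hξ : ξ ∈ U) (b : k) :
    (fun _ => ∑ y, ξ y - ξ b) + Pi.single 0 (Fintype.card k * ξ b - ∑ y, ξ y) ∈ U := by
  have hmem : ∑ a ∈ Finset.univ.erase 0, (fun x => ξ (a * x + b)) ∈ U :=
    U.sum_mem fun a ha => hU a b (Finset.ne_of_mem_erase ha) ξ hξ
  convert hmem using 1
  ext x
  rw [Finset.sum_apply, Finset.sum_erase_eq_sub (Finset.mem_univ 0), sum_apply_mul_add]
  simp only [Pi.add_apply, nsmul_eq_mul, zero_mul, zero_add]
  abel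

lemma exists_forall_const_add_single_mem [DecidableEq k] [DivisionRing F]
    (hq : (Fintype.card k : F) ≠ 0) {U : Submodule F (k → F)}
    (hU : ∀ (a : k) (b : k), a ≠ 0 → ∀ ξ ∈ U, (fun x => ξ (a * x + b)) ∈ U)
    {ξ : k → F} (hξ : ξ ∈ U) (hne : ∃ x y, ξ x ≠ ξ y) :
    ∃ c : F, ∀ z, (fun _ => c) + Pi.single z 1 ∈ U := by
  obtain ⟨x, y, hxy⟩ := hne
  obtain ⟨b, hb⟩ : ∃ b, Fintype.card k * ξ b ≠ ∑ y, ξ y := by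
    by_contra! h
    exact hxy (mul_left_cancel₀ hq ((h x).trans (h y).symm))
  set d := Fintype.card k * ξ b - ∑ y, ξ y
  have hd : d ≠ 0 := sub_ne_zero.2 hb
  refine ⟨d⁻¹ * (∑ y, ξ y - ξ b), fun z => ?_⟩
  have hmem := hU 1 (-z) one_ne_zero _
    (U.smul_mem d⁻¹ (const_add_single_mem_of_affine_invariant hU hξ b))
  convert hmem using 1
  ext x
  simp [Pi.single_apply, mul_add, hd, d, add_neg_eq_zero]

theorem invariant_subspaces_affine_action_general [DivisionRing F]
    (hq : (Fintype.card k : F) ≠ 0) (U : Submodule F (k → F))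
    (hU : ∀ (a : k) (b : k), a ≠ 0 → ∀ ξ ∈ U, (fun x => ξ (a * x + b)) ∈ U) :
    U = ⊥ ∨
    U = Submodule.span F {(fun _ => 1 : k → F)} ∨
    U = LinearMap.ker (∑ x : k, LinearMap.proj (R := F) (φ := fun _ : k => F) x) ∨
    U = ⊤ := by
  classical
  by_cases hconst : ∀ ξ ∈ U, ∀ x y, ξ x = ξ y
  · have hatom : IsAtom (Submodule.span F {(fun _ => 1 : k → F)}) :=
      nonzero_span_atom _ one_ne_zero
    have := hatom.le_iff.1 (le_span_one_of_forall_apply_eq hconst)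
    tauto
  · push Not at hconst
    obtain ⟨ξ, hξ, hne⟩ := hconst
    obtain ⟨c, hc⟩ := exists_forall_const_add_single_mem hq hU hξ hne
    have := isCoatom_ker_sum_proj.le_iff.1 (ker_sum_proj_le_of_const_add_single_mem c hc)
    tauto

end Affine

/-- Let `p` be an odd prime and `k` the field with `p²` elements. The only subspaces of
the `F₂`-space of functions `k → F₂` invariant under all affine substitutions
`ξ ↦ (x ↦ ξ(ax + b))` (`a ∈ k×`, `b ∈ k`) are `0`, the span of the constant function `1`,
the hyperplane `{ξ : ∑_{x ∈ k} ξ(x) = 0}`, and the whole space. -/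
theorem invariant_subspaces_affine_action
    (p : ℕ) (hp : p.Prime) (hodd : Odd p)
    (k : Type) [Field k] [Fintype k] (hcard : Fintype.card k = p ^ 2)
    (U : Submodule (ZMod 2) (k → ZMod 2))
    (hU : ∀ (a : k) (b : k), a ≠ 0 → ∀ ξ ∈ U, (fun x => ξ (a * x + b)) ∈ U) :
    U = ⊥ ∨
    U = Submodule.span (ZMod 2) {(fun _ => 1 : k → ZMod 2)} ∨
    U = LinearMap.ker (∑ x : k, LinearMap.proj (R := ZMod 2)
          (φ := fun _ : k => ZMod 2) x) ∨
    U = ⊤ := by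
  have hq : (Fintype.card k : ZMod 2) ≠ 0 := ZMod.natCast_ne_zero_iff_odd.2 (hcard ▸ hodd.pow)
  exact invariant_subspaces_affine_action_general hq U hU
end

section
/- Let p be an odd prime, let k be the finite field with p² elements, let F be a field extension of k, let K = F(A₀, A₁) be the field of rational functions in two independent variables A₀, A₁ over F, and set f(T) = T^{p²} + A₁T + A₀ ∈ K[T]. Then the Galois group of f over K is isomorphic to the group Aff(k) of affine transformations x ↦ ax + b (a ∈ k^×, b ∈ k) of k, which has order p²(p² − 1), and the Galois group of f(−T²) over K has order 2^{p²} · p² · (p² − 1). -/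
/-!
Write `q` for the cardinality of `k`. The map `T ↦ T ^ q + A₁ T` is `k`-linear, so the roots of `f`
are exactly the points `r + c (s - r)`, `c ∈ k`, of the affine `k`-line through any two distinct
roots `r`, `s`. The coefficients `A₀`, `A₁` are rational functions of `r` and `s`, so the splitting
field is `L = F(r, s)`, and as it has transcendence degree two, `r` and `s` are again independent
variables. Any other pair of distinct roots is such a rational basis too; the substitution carrying
one pair to the other fixes `A₀` and `A₁`, so the Galois group acts on the line as all of `Aff(k)`.

A splitting field of `f(-T²)` is generated over `L` by square roots of the elements `-ρ`, `ρ` a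
root of `f`. These are pairwise non-associate linear forms in `F[r, s]`, so no nonempty product of
distinct ones is a square in `L`, and Kummer theory gives degree `2 ^ q` over `L`.
-/

open IntermediateField Polynomial
open AffineMap (lineMap)

section RationalBasis

variable {ι F E E' : Type*} [Field F] [Field E] [Field E'] [Algebra F E] [Algebra F E']

theorem isFractionRing_algebraAdjoin_of_adjoin_eq_top {S : Set E} (hS : adjoin F S = ⊤) :
    IsFractionRing (Algebra.adjoin F S) E :=
  .of_field _ _ fun z ↦
    have ⟨u, hu, v, hv, huv⟩ := mem_adjoin_iff_div.mp (hS ▸ mem_top : z ∈ adjoin F S)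
    ⟨⟨u, hu⟩, ⟨v, hv⟩, huv⟩

theorem ne_of_algebraicIndependent_pair {r s : E} (hrs : AlgebraicIndependent F ![r, s]) :
    r ≠ s :=
  hrs.injective.ne (a₁ := 0) (a₂ := 1) (by decide)

/-- `x` is a rational basis of `E` over `F` if `E` is the field of rational functions over `F` in
the algebraically independent elements `x i`. -/
structure IsRationalBasis (F : Type*) {ι E : Type*} [Field F] [Field E] [Algebra F E]
    (x : ι → E) : Prop where
  algebraicIndependent : AlgebraicIndependent F x
  adjoin_range_eq_top : adjoin F (Set.range x) = ⊤

namespace IsRationalBasis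

/-- The isomorphism with the abstract field of rational functions determined by a rational
basis. -/
noncomputable def equivFractionRing {x : ι → E} (hx : IsRationalBasis F x) :
    FractionRing (MvPolynomial ι F) ≃ₐ[F] E :=
  hx.1.aevalEquivField.trans ((equivOfEq hx.2).trans topEquiv)

theorem equivFractionRing_algebraMap {x : ι → E} (hx : IsRationalBasis F x)
    (d : MvPolynomial ι F) : hx.equivFractionRing (algebraMap _ _ d) = MvPolynomial.aeval x d :=
  hx.1.aevalEquivField_algebraMap_apply_coe d

theorem exists_algHom {x : ι → E} (hx : IsRationalBasis F x) {y : ι → E'}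
    (hy : AlgebraicIndependent F y) :
    ∃ τ : E →ₐ[F] E', ∀ i, τ (x i) = y i := by
  have hy_inj : Function.Injective (MvPolynomial.aeval (R := F) y) := hy
  let φ : FractionRing (MvPolynomial ι F) →ₐ[F] E' := IsFractionRing.liftAlgHom hy_inj
  refine ⟨φ.comp hx.equivFractionRing.symm, fun i ↦ ?_⟩
  have hxi : hx.equivFractionRing.symm (x i) =
        algebraMap (MvPolynomial ι F) _ (MvPolynomial.X i) := by
    rw [AlgEquiv.symm_apply_eq, equivFractionRing_algebraMap, MvPolynomial.aeval_X]
  simp [φ, hxi]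

theorem algHom_ext {x : ι → E} (hx : IsRationalBasis F x) {σ τ : E →ₐ[F] E'}
    (h : ∀ i, σ (x i) = τ (x i)) : σ = τ := by
  have h' : σ.comp topEquiv.toAlgHom = τ.comp topEquiv.toAlgHom :=
    algHom_ext_of_eq_adjoin F hx.2.symm (by rintro _ ⟨i, rfl⟩; exact h i)
  exact AlgHom.ext fun z ↦ DFunLike.congr_fun h' ⟨z, mem_top⟩

theorem isSquare_aeval_iff {x : ι → E} (hx : IsRationalBasis F x) {d : MvPolynomial ι F} :
    IsSquare (MvPolynomial.aeval x d) ↔ IsSquare d := by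
  refine ⟨fun ⟨z, hz⟩ ↦ ?_, fun h ↦ h.map _⟩
  have hz' : hx.equivFractionRing.symm z ^ 2 = algebraMap _ _ d := by
    rw [← map_pow, AlgEquiv.symm_apply_eq, equivFractionRing_algebraMap, sq, hz]
  obtain ⟨w, hw⟩ := IsIntegrallyClosed.exists_algebraMap_eq_of_isIntegral_pow two_pos
    (hz' ▸ isIntegral_algebraMap)
  refine ⟨w, IsFractionRing.injective _ (FractionRing (MvPolynomial ι F)) ?_⟩
  rw [← hz', ← hw, map_mul, sq]

theorem of_adjoin_range_eq_top [Finite ι] {a x : ι → E} (ha : AlgebraicIndependent F a)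
    (hx : adjoin F (Set.range x) = ⊤) : IsRationalBasis F x where
  algebraicIndependent := by
    have := isFractionRing_algebraAdjoin_of_adjoin_eq_top hx
    have : Algebra.IsAlgebraic (Algebra.adjoin F (Set.range x)) E :=
      IsLocalization.isAlgebraic _ (nonZeroDivisors _)
    exact (Algebra.IsAlgebraic.isTranscendenceBasis_of_lift_le_trdeg_of_finite F x
      ha.lift_cardinalMk_le_trdeg).1
  adjoin_range_eq_top := hx

end IsRationalBasis

theorem isRationalBasis_algebraMap_X [Algebra (MvPolynomial ι F) E]
    [IsScalarTower F (MvPolynomial ι F) E] [IsFractionRing (MvPolynomial ι F) E] :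
    IsRationalBasis F fun i ↦ algebraMap (MvPolynomial ι F) E (MvPolynomial.X i) where
  algebraicIndependent :=
    (MvPolynomial.algebraicIndependent_X ι F).map' (f := IsScalarTower.toAlgHom F _ E)
      (IsFractionRing.injective _ _)
  adjoin_range_eq_top := by
    refine top_unique fun z _ ↦ ?_
    obtain ⟨u, v, -, rfl⟩ := IsFractionRing.div_surjective (A := MvPolynomial ι F) z
    have hmem (w : MvPolynomial ι F) : algebraMap _ E w ∈ adjoin F (Set.range fun i ↦
        algebraMap (MvPolynomial ι F) E (MvPolynomial.X i)) := by
      induction w using MvPolynomial.induction_on with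
      | C c =>
        rw [← MvPolynomial.algebraMap_eq, ← IsScalarTower.algebraMap_apply]
        exact IntermediateField.algebraMap_mem _ c
      | add u v hu hv => exact map_add (algebraMap _ E) u v ▸ add_mem hu hv
      | mul_X u i hu =>
        exact map_mul (algebraMap _ E) u _ ▸ mul_mem hu (subset_adjoin F _ ⟨i, rfl⟩)
    exact div_mem (hmem u) (hmem v)

end RationalBasis

section Affine

theorem affineEquiv_eq_lineMap {k : Type*} [Field k] (e : k ≃ᵃ[k] k) (c : k) :
    e c = lineMap (e 0) (e 1) c := by
  simpa [AffineMap.lineMap_apply] using AffineMap.apply_lineMap e.toAffineMap 0 1 c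

theorem exists_affineEquiv_apply_zero_one {k : Type*} [Field k] {b d : k} (hbd : b ≠ d) :
    ∃ e : k ≃ᵃ[k] k, e 0 = b ∧ e 1 = d :=
  ⟨.ofLinearEquiv (.smulOfNeZero k k (d - b) (sub_ne_zero.mpr hbd.symm)) 0 b, by simp, by simp⟩

theorem card_affineEquiv (k : Type*) [Field k] [Fintype k] :
    Nat.card (k ≃ᵃ[k] k) = Fintype.card k * (Fintype.card k - 1) := by
  classical
  let ends (e : k ≃ᵃ[k] k) : (Finset.univ : Finset k).offDiag :=
    ⟨(e 0, e 1), by simp⟩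
  have h_ends : ends.Bijective := by
    refine ⟨fun e e' h ↦ AffineEquiv.ext fun c ↦ ?_, fun ⟨(b, d), hbd⟩ ↦ ?_⟩
    · simp only [ends, Subtype.mk.injEq, Prod.mk.injEq] at h
      rw [affineEquiv_eq_lineMap e, affineEquiv_eq_lineMap e', h.1, h.2]
    · obtain ⟨e, rfl, rfl⟩ := exists_affineEquiv_apply_zero_one (Finset.mem_offDiag.mp hbd).2.2
      exact ⟨e, rfl⟩
  rw [Nat.card_congr (Equiv.ofBijective ends h_ends), Nat.card_eq_fintype_card, Fintype.card_coe,
    Finset.offDiag_card, Finset.card_univ, Nat.mul_sub_one]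

open MvPolynomial in
theorem not_isSquare_prod_neg_lineMap_X {k F : Type*} [Field k] [Field F] [Algebra k F]
    {t : Finset k} (ht : t.Nonempty) :
    ¬IsSquare (∏ c ∈ t, -lineMap (X 0) (X 1) c : MvPolynomial (Fin 2) F) := by
  intro hsq
  -- on the line `X 1 - X 0 = 1` the linear forms become the distinct monic polynomials `X - c`
  let φ : MvPolynomial (Fin 2) F →ₐ[F] F[X] := aeval ![-Polynomial.X, 1 - Polynomial.X]
  have hφ (c : k) : φ (-lineMap (X 0) (X 1) c) =
      Polynomial.X - Polynomial.C (algebraMap k F c) := by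
    have hc : φ (c • (X 1 - X 0)) = Polynomial.C (algebraMap k F c) := by
      rw [Algebra.smul_def, map_mul, IsScalarTower.algebraMap_apply k F, φ.commutes]
      simp [φ]
    rw [AffineMap.lineMap_apply, vsub_eq_sub, vadd_eq_add, map_neg, map_add, hc]
    simp [φ]
    ring
  have hsep : (∏ c ∈ t, (Polynomial.X - Polynomial.C (algebraMap k F c))).Separable :=
    separable_prod_X_sub_C_iff'.mpr fun _ _ _ _ h ↦ (algebraMap k F).injective h
  obtain ⟨z, hz⟩ := hsq.map φ
  simp only [map_prod, hφ] at hz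
  have hunit : IsUnit (∏ c ∈ t, (Polynomial.X - Polynomial.C (algebraMap k F c))) :=
    have hz_unit : IsUnit z := hsep.squarefree z (dvd_of_eq hz.symm)
    hz ▸ hz_unit.mul hz_unit
  obtain ⟨c, hc⟩ := ht
  exact Polynomial.not_isUnit_X_sub_C _ (isUnit_of_dvd_unit (Finset.dvd_prod_of_mem _ hc) hunit)

end Affine

section AffineTrinomial

variable {k K L : Type*} [Field k] [Fintype k] [Field K] [Field L] [Algebra K L] [Algebra k L]

/-- The affine polynomial `X ^ q + a 1 * X + a 0`, its lower coefficients indexed by degree. Over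
an extension of the field with `q` elements in which it splits with simple roots, these roots form
an affine line over that field. -/
noncomputable def affineTrinomial {R : Type*} [Semiring R] (q : ℕ) (a : Fin 2 → R) : R[X] :=
  X ^ q + C (a 1) * X + C (a 0)

theorem aeval_affineTrinomial (q : ℕ) (a : Fin 2 → K) (y : L) :
    aeval y (affineTrinomial q a) = y ^ q + algebraMap K L (a 1) * y + algebraMap K L (a 0) := by
  simp [affineTrinomial]

theorem natDegree_affineTrinomial {q : ℕ} (hq : 1 < q) (a : Fin 2 → K) :
    (affineTrinomial q a).natDegree = q := by
  have hdeg : (C (a 1) * X + C (a 0)).degree < (X ^ q : K[X]).degree := by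
    rw [degree_X_pow]
    exact degree_linear_le.trans_lt (mod_cast hq)
  rw [affineTrinomial, add_assoc, natDegree_add_eq_left_of_degree_lt hdeg, natDegree_X_pow]

theorem separable_affineTrinomial {q : ℕ} (hq : (q : K) = 0) {a : Fin 2 → K} (ha : a 1 ≠ 0) :
    (affineTrinomial q a).Separable := by
  have hderiv : derivative (affineTrinomial q a) = C (a 1) := by
    simp [affineTrinomial, derivative_X_pow, hq]
  exact ⟨0, C (a 1)⁻¹, by rw [hderiv, zero_mul, zero_add, ← C_mul, inv_mul_cancel₀ ha, C_1]⟩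

theorem exists_ne_aeval_affineTrinomial_eq_zero {q : ℕ} (hq : 1 < q) {a : Fin 2 → K}
    (hsep : (affineTrinomial q a).Separable)
    (hsplit : ((affineTrinomial q a).map (algebraMap K L)).Splits) :
    ∃ r s : L, r ≠ s ∧ aeval r (affineTrinomial q a) = 0 ∧ aeval s (affineTrinomial q a) = 0 := by
  have hcard := card_rootSet_eq_natDegree hsep hsplit
  rw [natDegree_affineTrinomial hq] at hcard
  obtain ⟨⟨r, hr⟩, ⟨s, hs⟩, hrs⟩ := Fintype.exists_pair_of_one_lt_card (hcard ▸ hq)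
  exact ⟨r, s, Subtype.coe_ne_coe.mpr hrs, aeval_eq_zero_of_mem_rootSet hr,
    aeval_eq_zero_of_mem_rootSet hs⟩

theorem algebraMap_coeff_one_eq {q : ℕ} {a : Fin 2 → K} {r s : L} (hrs : r ≠ s)
    (hr : aeval r (affineTrinomial q a) = 0) (hs : aeval s (affineTrinomial q a) = 0) :
    algebraMap K L (a 1) = (s ^ q - r ^ q) / (r - s) := by
  rw [aeval_affineTrinomial] at hr hs
  rw [eq_div_iff (sub_ne_zero.mpr hrs)]
  linear_combination hr - hs

theorem algebraMap_coeff_zero_eq {q : ℕ} {a : Fin 2 → K} {r : L}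
    (hr : aeval r (affineTrinomial q a) = 0) :
    algebraMap K L (a 0) = -r ^ q - algebraMap K L (a 1) * r := by
  rw [aeval_affineTrinomial] at hr
  linear_combination hr

theorem lineMap_pow_card (r s : L) (c : k) :
    lineMap r s c ^ Fintype.card k = lineMap (r ^ Fintype.card k) (s ^ Fintype.card k) c :=
  AffineMap.apply_lineMap (FiniteField.frobeniusAlgHom k L).toLinearMap.toAffineMap r s c

theorem aeval_affineTrinomial_lineMap (a : Fin 2 → K) (r s : L) (c : k) :
    aeval (lineMap r s c) (affineTrinomial (Fintype.card k) a) =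
      lineMap (aeval r (affineTrinomial (Fintype.card k) a))
        (aeval s (affineTrinomial (Fintype.card k) a)) c := by
  simp only [aeval_affineTrinomial, lineMap_pow_card]
  simp only [AffineMap.lineMap_apply, vsub_eq_sub, vadd_eq_add, Algebra.smul_def]
  ring

theorem exists_algebraMap_eq_of_pow_card_eq {z : L} (hz : z ^ Fintype.card k = z) :
    ∃ c : k, algebraMap k L c = z := by
  have hsplit : (X ^ Fintype.card k - X : k[X]).Splits := by
    rw [splits_iff_card_roots, FiniteField.roots_X_pow_card_sub_X,
      FiniteField.X_pow_card_sub_X_natDegree_eq _ Fintype.one_lt_card]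
    rfl
  refine hsplit.mem_range_of_isRoot ?_ ?_
  · exact FiniteField.X_pow_card_sub_X_ne_zero _ Fintype.one_lt_card
  · simp [hz]

theorem aeval_affineTrinomial_eq_zero_iff {a : Fin 2 → K} {r s : L} (hrs : r ≠ s)
    (hr : aeval r (affineTrinomial (Fintype.card k) a) = 0)
    (hs : aeval s (affineTrinomial (Fintype.card k) a) = 0) {y : L} :
    aeval y (affineTrinomial (Fintype.card k) a) = 0 ↔ ∃ c : k, lineMap r s c = y := by
  constructor
  · intro hy
    have hsr : s - r ≠ 0 := sub_ne_zero.mpr hrs.symm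
    have hfixed : ((y - r) / (s - r)) ^ Fintype.card k = (y - r) / (s - r) := by
      have hfrob (u v : L) := map_sub (FiniteField.frobeniusAlgHom k L) u v
      simp only [FiniteField.coe_frobeniusAlgHom] at hfrob
      rw [aeval_affineTrinomial] at hr hs hy
      rw [div_pow, hfrob, hfrob, div_eq_div_iff (by rw [← hfrob]; exact pow_ne_zero _ hsr) hsr]
      linear_combination (s - r) * (hy - hr) - (y - r) * (hs - hr)
    obtain ⟨c, hc⟩ := exists_algebraMap_eq_of_pow_card_eq hfixed
    refine ⟨c, ?_⟩
    rw [AffineMap.lineMap_apply, Algebra.smul_def, hc, vsub_eq_sub, vadd_eq_add,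
      div_mul_cancel₀ _ hsr, sub_add_cancel]
  · rintro ⟨c, rfl⟩
    rw [aeval_affineTrinomial_lineMap, hr, hs, AffineMap.lineMap_same_apply]

end AffineTrinomial

section GaloisGroup

variable {k F K L : Type*} [Field k] [Fintype k] [Field F] [Field K] [Field L]
  [Algebra F K] [Algebra K L] [Algebra F L] [IsScalarTower F K L]

theorem isRationalBasis_of_roots [Algebra k F] [Algebra k L] [IsScalarTower k F L]
    {a : Fin 2 → K} (ha : IsRationalBasis F a)
    (hL : IsSplittingField K L (affineTrinomial (Fintype.card k) a)) {r s : L} (hrs : r ≠ s)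
    (hr : aeval r (affineTrinomial (Fintype.card k) a) = 0)
    (hs : aeval s (affineTrinomial (Fintype.card k) a) = 0) : IsRationalBasis F ![r, s] := by
  have ha_L : AlgebraicIndependent F (algebraMap K L ∘ a) :=
    ha.algebraicIndependent.map' (f := IsScalarTower.toAlgHom F K L) (algebraMap K L).injective
  refine .of_adjoin_range_eq_top ha_L ?_
  set E := adjoin F (Set.range ![r, s])
  have hrE : r ∈ E := subset_adjoin F _ ⟨0, rfl⟩
  have hsE : s ∈ E := subset_adjoin F _ ⟨1, rfl⟩
  have hcoeff_one : algebraMap K L (a 1) ∈ E := algebraMap_coeff_one_eq hrs hr hs ▸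
    div_mem (sub_mem (pow_mem hsE _) (pow_mem hrE _)) (sub_mem hrE hsE)
  have hcoeff_zero : algebraMap K L (a 0) ∈ E := algebraMap_coeff_zero_eq hr ▸
    sub_mem (neg_mem (pow_mem hrE _)) (mul_mem hcoeff_one hrE)
  have hK : adjoin F (Set.range a) ≤ E.comap (IsScalarTower.toAlgHom F K L) :=
    adjoin_le_iff.mpr <| Set.range_subset_iff.mpr <|
      Fin.forall_fin_two.mpr ⟨hcoeff_zero, hcoeff_one⟩
  rw [ha.adjoin_range_eq_top] at hK
  suffices h : ∀ z ∈ Algebra.adjoin K ((affineTrinomial (Fintype.card k) a).rootSet L), z ∈ E from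
    top_unique fun z _ ↦ h z (hL.adjoin_rootSet ▸ Algebra.mem_top)
  intro z hz
  induction hz using Algebra.adjoin_induction with
  | mem y hy =>
    obtain ⟨c, rfl⟩ :=
      (aeval_affineTrinomial_eq_zero_iff hrs hr hs).mp (aeval_eq_zero_of_mem_rootSet hy)
    rw [AffineMap.lineMap_apply, ← IsScalarTower.algebraMap_smul F c (s -ᵥ r)]
    exact add_mem (E.smul_mem (sub_mem hsE hrE)) hrE
  | algebraMap x => exact hK mem_top
  | add x y _ _ hx hy => exact add_mem hx hy
  | mul x y _ _ hx hy => exact mul_mem hx hy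

theorem exists_algEquiv_of_roots [Algebra.IsAlgebraic K L] {q : ℕ} {a : Fin 2 → K}
    (ha : IsRationalBasis F a) {r s r' s' : L} (hrs : IsRationalBasis F ![r, s])
    (hrs' : AlgebraicIndependent F ![r', s'])
    (hr : aeval r (affineTrinomial q a) = 0) (hs : aeval s (affineTrinomial q a) = 0)
    (hr' : aeval r' (affineTrinomial q a) = 0) (hs' : aeval s' (affineTrinomial q a) = 0) :
    ∃ σ : L ≃ₐ[K] L, σ r = r' ∧ σ s = s' := by
  obtain ⟨τ, hτ⟩ := hrs.exists_algHom hrs'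
  obtain ⟨hτr, hτs⟩ : τ r = r' ∧ τ s = s' := ⟨hτ 0, hτ 1⟩
  have hne : r ≠ s := ne_of_algebraicIndependent_pair hrs.algebraicIndependent
  have hne' : r' ≠ s' := ne_of_algebraicIndependent_pair hrs'
  have hone : τ (algebraMap K L (a 1)) = algebraMap K L (a 1) :=
    calc τ (algebraMap K L (a 1))
        = (s' ^ q - r' ^ q) / (r' - s') := by
          simp only [algebraMap_coeff_one_eq hne hr hs, map_div₀, map_sub, map_pow, hτr, hτs]
      _ = algebraMap K L (a 1) := (algebraMap_coeff_one_eq hne' hr' hs').symm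
  have hzero : τ (algebraMap K L (a 0)) = algebraMap K L (a 0) :=
    calc τ (algebraMap K L (a 0))
        = -r' ^ q - algebraMap K L (a 1) * r' := by
          rw [algebraMap_coeff_zero_eq hr, map_sub, map_neg, map_mul, hone, map_pow, hτr]
      _ = algebraMap K L (a 0) := (algebraMap_coeff_zero_eq hr').symm
  have hK : τ.comp (IsScalarTower.toAlgHom F K L) = IsScalarTower.toAlgHom F K L :=
    ha.algHom_ext (Fin.forall_fin_two.mpr ⟨hzero, hone⟩)
  let σ : L →ₐ[K] L := { τ with commutes' := DFunLike.congr_fun hK }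
  exact ⟨.ofBijective σ (Algebra.IsAlgebraic.algHom_bijective σ), hτr, hτs⟩

end GaloisGroup

section GaloisAction

variable {k K L : Type*} [Field k] [Field K] [Field L]
  [Algebra k K] [Algebra K L] [Algebra k L] [IsScalarTower k K L]

theorem algEquiv_apply_lineMap {r s : L} {σ : L ≃ₐ[K] L} {e : k ≃ᵃ[k] k}
    (hr : σ r = lineMap r s (e 0)) (hs : σ s = lineMap r s (e 1)) (c : k) :
    σ (lineMap r s c) = lineMap r s (e c) :=
  calc σ (lineMap r s c)
      = lineMap (σ r) (σ s) c :=
        AffineMap.apply_lineMap (σ.toLinearMap.restrictScalars k).toAffineMap r s c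
    _ = lineMap r s (lineMap (e 0) (e 1) c) := by rw [hr, hs, AffineMap.apply_lineMap]
    _ = lineMap r s (e c) := by rw [← affineEquiv_eq_lineMap]

variable [Fintype k] {a : Fin 2 → K} {r s : L} (hrs : r ≠ s)
    (hr : aeval r (affineTrinomial (Fintype.card k) a) = 0)
    (hs : aeval s (affineTrinomial (Fintype.card k) a) = 0)

include hrs hr hs

theorem exists_affineEquiv_of_algEquiv (σ : L ≃ₐ[K] L) :
    ∃ e : k ≃ᵃ[k] k, ∀ c, σ (lineMap r s c) = lineMap r s (e c) := by
  have hroot {y : L} (hy : aeval y (affineTrinomial (Fintype.card k) a) = 0) :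
      ∃ c : k, lineMap r s c = σ y :=
    (aeval_affineTrinomial_eq_zero_iff hrs hr hs).mp <| by
      rw [aeval_algEquiv, AlgHom.comp_apply, hy]
      exact map_zero σ
  obtain ⟨b, hb⟩ := hroot hr
  obtain ⟨d, hd⟩ := hroot hs
  have hbd : b ≠ d := by
    rintro rfl
    exact hrs (σ.injective (hb.symm.trans hd))
  obtain ⟨e, rfl, rfl⟩ := exists_affineEquiv_apply_zero_one hbd
  exact ⟨e, algEquiv_apply_lineMap hb.symm hd.symm⟩

theorem nonempty_algEquiv_mulEquiv_affineEquiv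
    (hL : IsSplittingField K L (affineTrinomial (Fintype.card k) a))
    (htrans : ∀ b d : k, b ≠ d → ∃ σ : L ≃ₐ[K] L, σ r = lineMap r s b ∧ σ s = lineMap r s d) :
    Nonempty ((L ≃ₐ[K] L) ≃* (k ≃ᵃ[k] k)) := by
  choose e he using exists_affineEquiv_of_algEquiv (k := k) hrs hr hs
  have hinj : Function.Injective (lineMap r s : k → L) := AffineMap.lineMap_injective k hrs
  let φ : (L ≃ₐ[K] L) →* (k ≃ᵃ[k] k) := .mk' e fun σ τ ↦ AffineEquiv.ext fun c ↦ hinj <| by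
    rw [← he, AlgEquiv.mul_apply, he, he, AffineEquiv.mul_def, AffineEquiv.trans_apply]
  refine ⟨.ofBijective φ ⟨fun σ τ hστ ↦ ?_, fun e' ↦ ?_⟩⟩
  · have hroots : Set.EqOn σ.toAlgHom τ.toAlgHom
        ((affineTrinomial (Fintype.card k) a).rootSet L) := by
      intro y hy
      obtain ⟨c, rfl⟩ :=
        (aeval_affineTrinomial_eq_zero_iff hrs hr hs).mp (aeval_eq_zero_of_mem_rootSet hy)
      exact (he σ c).trans ((congrArg (fun e ↦ lineMap r s (e c)) hστ).trans (he τ c).symm)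
    exact AlgEquiv.coe_toAlgHom_injective (AlgHom.ext_of_adjoin_eq_top hL.adjoin_rootSet hroots)
  · obtain ⟨σ, hσr, hσs⟩ := htrans (e' 0) (e' 1) (e'.injective.ne zero_ne_one)
    exact ⟨σ, AffineEquiv.ext fun c ↦
      hinj ((he σ c).symm.trans (algEquiv_apply_lineMap hσr hσs c))⟩

end GaloisAction

section Kummer

variable {ι L M : Type*} [Field L] [Field M] [Algebra L M]

theorem exists_eq_add_mul_of_mem_adjoin_simple {z w : M} (hz : z ^ 2 ∈ (⊥ : IntermediateField L M))
    (hw : w ∈ L⟮z⟯) : ∃ u v : L, w = algebraMap L M u + algebraMap L M v * z := by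
  obtain ⟨d, hd⟩ := mem_bot.mp hz
  have hz_int : IsIntegral L z := .of_pow two_pos (hd ▸ isIntegral_algebraMap)
  rw [← mem_toSubalgebra, adjoin_simple_toSubalgebra_of_isAlgebraic hz_int.isAlgebraic] at hw
  induction hw using Algebra.adjoin_induction with
  | mem y hy => exact ⟨0, 1, by simp [Set.mem_singleton_iff.mp hy]⟩
  | algebraMap c => exact ⟨c, 0, by simp⟩
  | add y y' _ _ hy hy' =>
    obtain ⟨u, v, rfl⟩ := hy
    obtain ⟨u', v', rfl⟩ := hy'
    exact ⟨u + u', v + v', by simp only [map_add]; ring⟩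
  | mul y y' _ _ hy hy' =>
    obtain ⟨u, v, rfl⟩ := hy
    obtain ⟨u', v', rfl⟩ := hy'
    exact ⟨u * u' + v * v' * d, u * v' + v * u', by simp only [map_add, map_mul, hd]; ring⟩

theorem mem_bot_or_mul_mem_bot_of_sq_mem_bot (h2 : (2 : L) ≠ 0) {z w : M}
    (hz : z ^ 2 ∈ (⊥ : IntermediateField L M)) (hw : w ∈ L⟮z⟯)
    (hw2 : w ^ 2 ∈ (⊥ : IntermediateField L M)) :
    w ∈ (⊥ : IntermediateField L M) ∨ w * z ∈ (⊥ : IntermediateField L M) := by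
  obtain ⟨u, v, rfl⟩ := exists_eq_add_mul_of_mem_adjoin_simple hz hw
  obtain ⟨d, hd⟩ := mem_bot.mp hz
  obtain ⟨b, hb⟩ := mem_bot.mp hw2
  rcases eq_or_ne u 0 with rfl | hu
  · exact .inr (mem_bot.mpr ⟨v * d, by rw [map_mul, hd, map_zero]; ring⟩)
  rcases eq_or_ne v 0 with rfl | hv
  · exact .inl (mem_bot.mpr ⟨u, by simp⟩)
  have hne : algebraMap L M (2 * u * v) ≠ 0 := by simp [hu, hv, h2]
  have hz_eq : z = algebraMap L M ((b - u ^ 2 - v ^ 2 * d) / (2 * u * v)) := by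
    rw [map_div₀, eq_div_iff hne]
    simp only [map_sub, map_mul, map_pow, hb, hd, map_ofNat]
    ring
  exact .inl (mem_bot.mpr ⟨u + v * _, by rw [map_add, map_mul, ← hz_eq]⟩)

theorem adjoin_image_insert [DecidableEq ι] (x : ι → M) (i : ι) (s : Finset ι) :
    adjoin L (x '' ↑(insert i s)) = (adjoin (adjoin L (x '' s)) {x i}).restrictScalars L := by
  rw [adjoin_adjoin_left, Finset.coe_insert, Set.image_insert_eq, Set.union_singleton]

theorem mem_bot_adjoin_iff {S : Set M} {w : M} :
    w ∈ (⊥ : IntermediateField (adjoin L S) M) ↔ w ∈ adjoin L S := by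
  simp [mem_bot]

theorem exists_mul_prod_mem_bot_of_sq_mem_bot (h2 : (2 : L) ≠ 0) {s : Finset ι} {x : ι → M}
    (hx : ∀ i ∈ s, x i ^ 2 ∈ (⊥ : IntermediateField L M)) {w : M}
    (hw : w ∈ adjoin L (x '' s)) (hw2 : w ^ 2 ∈ (⊥ : IntermediateField L M)) :
    ∃ t ⊆ s, w * ∏ i ∈ t, x i ∈ (⊥ : IntermediateField L M) := by
  classical
  induction s using Finset.induction_on generalizing w with
  | empty => exact ⟨∅, subset_rfl, by simpa using hw⟩
  | insert i s his ih =>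
    obtain ⟨hxi, hxs⟩ := Finset.forall_mem_insert _ _ _ |>.mp hx
    have hbot {y : M} (hy : y ∈ (⊥ : IntermediateField L M)) :
        y ∈ (⊥ : IntermediateField (adjoin L (x '' s)) M) :=
      mem_bot_adjoin_iff.mpr (bot_le (a := adjoin L (x '' s)) hy)
    rw [adjoin_image_insert, mem_restrictScalars] at hw
    have h2' : (2 : adjoin L (x '' s)) ≠ 0 :=
      fun h ↦ h2 ((algebraMap L (adjoin L (x '' s))).injective (by rw [map_ofNat, map_zero, h]))
    rcases mem_bot_or_mul_mem_bot_of_sq_mem_bot h2' (hbot hxi) hw (hbot hw2) with h | h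
    · obtain ⟨t, hts, ht⟩ := ih hxs (mem_bot_adjoin_iff.mp h) hw2
      exact ⟨t, hts.trans (Finset.subset_insert i s), ht⟩
    · obtain ⟨t, hts, ht⟩ := ih hxs (mem_bot_adjoin_iff.mp h) (mul_pow w (x i) 2 ▸ mul_mem hw2 hxi)
      refine ⟨insert i t, Finset.insert_subset_insert i hts, ?_⟩
      rwa [Finset.prod_insert fun hit ↦ his (hts hit), ← mul_assoc]

theorem finrank_adjoin_simple_eq_two {z : M} (hz : z ∉ (⊥ : IntermediateField L M))
    (hz2 : z ^ 2 ∈ (⊥ : IntermediateField L M)) : Module.finrank L L⟮z⟯ = 2 := by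
  obtain ⟨d, hd⟩ := mem_bot.mp hz2
  have hz_int : IsIntegral L z := .of_pow two_pos (hd ▸ isIntegral_algebraMap)
  rw [adjoin.finrank hz_int]
  refine le_antisymm ?_ ((minpoly.two_le_natDegree_iff hz_int).mpr fun h ↦ hz (mem_bot.mpr h))
  have h_root : aeval z (X ^ 2 - C d) = 0 := by simp [hd]
  exact natDegree_X_pow_sub_C (n := 2) (r := d) ▸
    natDegree_le_natDegree (minpoly.min L z (monic_X_pow_sub_C d two_ne_zero) h_root)

theorem finrank_adjoin_image_of_sq_mem_bot (h2 : (2 : L) ≠ 0) {s : Finset ι} {x : ι → M}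
    (hx : ∀ i ∈ s, x i ^ 2 ∈ (⊥ : IntermediateField L M))
    (hprod : ∀ t ⊆ s, t.Nonempty → ∏ i ∈ t, x i ∉ (⊥ : IntermediateField L M)) :
    Module.finrank L (adjoin L (x '' s)) = 2 ^ s.card := by
  classical
  induction s using Finset.induction_on with
  | empty => simp
  | insert i s his ih =>
    obtain ⟨hxi, hxs⟩ := Finset.forall_mem_insert _ _ _ |>.mp hx
    have hxi_not_mem : x i ∉ adjoin L (x '' s) := fun h ↦ by
      obtain ⟨t, hts, ht⟩ := exists_mul_prod_mem_bot_of_sq_mem_bot h2 hxs h hxi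
      refine hprod (insert i t) (Finset.insert_subset_insert i hts) (Finset.insert_nonempty i t) ?_
      rwa [Finset.prod_insert fun hit ↦ his (hts hit)]
    have hquad : Module.finrank (adjoin L (x '' s)) (adjoin (adjoin L (x '' s)) {x i}) = 2 :=
      finrank_adjoin_simple_eq_two (mem_bot_adjoin_iff.not.mpr hxi_not_mem)
        (mem_bot_adjoin_iff.mpr (bot_le (a := adjoin L (x '' s)) hxi))
    calc Module.finrank L (adjoin L (x '' ↑(insert i s)))
        = Module.finrank L (adjoin (adjoin L (x '' s)) {x i}) := by
          rw [adjoin_image_insert]; rfl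
      _ = Module.finrank L (adjoin L (x '' s)) *
            Module.finrank (adjoin L (x '' s)) (adjoin (adjoin L (x '' s)) {x i}) :=
          (Module.finrank_mul_finrank _ _ _).symm
      _ = 2 ^ (insert i s).card := by
          rw [ih hxs fun t ht ↦ hprod t (ht.trans (Finset.subset_insert i s)), hquad,
            Finset.card_insert_of_notMem his, pow_succ]

end Kummer

section Composition

variable {K L M : Type*} [Field K] [Field L] [Field M] [Algebra K L] [Algebra L M] [Algebra K M]
  [IsScalarTower K L M]

theorem exists_eval_eval_eq_zero_of_splits_comp {f g r : M[X]} (hf : f ≠ 0) (hg : g.natDegree ≠ 0)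
    (hfg : (f.comp g).Splits) (hrf : r ∣ f) (hr : r.natDegree ≠ 0) :
    ∃ y, r.eval (g.eval y) = 0 := by
  have hcomp : f.comp g ≠ 0 := by
    rw [Ne, comp_eq_zero_iff]
    rintro (h | ⟨-, h⟩)
    exacts [hf h, hg (h ▸ natDegree_C _)]
  obtain ⟨d, rfl⟩ := hrf
  have hrg : (r.comp g).Splits := hfg.of_dvd hcomp ⟨d.comp g, mul_comp r d g⟩
  obtain ⟨y, hy⟩ := hrg.exists_eval_eq_zero fun h ↦
    mul_ne_zero hr hg (natDegree_comp (p := r) (q := g) ▸ natDegree_eq_of_degree_eq_some h)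
  exact ⟨y, eval_comp (p := r) ▸ hy⟩

theorem splits_of_splits_comp {f g : M[X]} (hf : f ≠ 0) (hg : g.natDegree ≠ 0)
    (hfg : (f.comp g).Splits) : f.Splits := by
  obtain ⟨u, hu⟩ := UniqueFactorizationMonoid.factors_prod hf
  have hlinear : ∀ r ∈ UniqueFactorizationMonoid.factors f, r.Splits := fun r hr ↦ by
    have hirr := UniqueFactorizationMonoid.irreducible_of_factor r hr
    obtain ⟨y, hy⟩ := exists_eval_eval_eq_zero_of_splits_comp hf hg hfg
      (UniqueFactorizationMonoid.dvd_of_mem_factors hr) hirr.natDegree_pos.ne'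
    exact .of_degree_eq_one (degree_eq_one_of_irreducible_of_root hirr hy)
  rw [← hu]
  exact (Splits.multisetProd hlinear).mul u.isUnit.splits

theorem separable_comp_neg_X_sq {f : K[X]} (h2 : (2 : K) ≠ 0) (hf : f.Separable)
    (h0 : f.eval 0 ≠ 0) : (f.comp (-X ^ 2)).Separable := by
  have hX : IsCoprime (f.comp (-X ^ 2)) X := by
    refine IsCoprime.symm ((irreducible_X.coprime_iff_not_dvd).mpr ?_)
    rw [X_dvd_iff, coeff_zero_eq_eval_zero, eval_comp]
    simpa using h0
  have hderiv : derivative (f.comp (-X ^ 2)) = C (-2) * (X * (derivative f).comp (-X ^ 2)) := by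
    rw [derivative_comp]
    simp only [derivative_X_sq, map_neg, map_ofNat]
    ring
  have hcomp : IsCoprime (f.comp (-X ^ 2)) ((derivative f).comp (-X ^ 2)) :=
    IsCoprime.map hf (compRingHom (-X ^ 2))
  have hunit : IsUnit (C (-2) : K[X]) := isUnit_C.mpr (neg_ne_zero.mpr h2).isUnit
  rw [separable_def, hderiv, isCoprime_mul_unit_left_right hunit]
  exact hX.mul_right hcomp

theorem adjoin_eq_top_of_isSplittingField_comp_neg_X_sq {f : K[X]} (hf : f ≠ 0)
    (hL : (f.map (algebraMap K L)).Splits) (hM : IsSplittingField K M (f.comp (-X ^ 2)))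
    {x : L → M} (hx : ∀ ρ ∈ f.rootSet L, x ρ ^ 2 = algebraMap L M (-ρ)) :
    adjoin L (x '' f.rootSet L) = ⊤ := by
  suffices h : ∀ z ∈ Algebra.adjoin K ((f.comp (-X ^ 2)).rootSet M),
      z ∈ adjoin L (x '' f.rootSet L) from
    top_unique fun z _ ↦ h z (hM.adjoin_rootSet ▸ Algebra.mem_top)
  intro z hz
  induction hz using Algebra.adjoin_induction with
  | mem y hy =>
    have hyf : -y ^ 2 ∈ f.rootSet M := (mem_rootSet_of_ne hf).mpr <| by
      simpa [aeval_comp] using aeval_eq_zero_of_mem_rootSet hy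
    rw [← hL.image_rootSet (IsScalarTower.toAlgHom K L M)] at hyf
    obtain ⟨ρ, hρ, hρy⟩ := hyf
    have hsq : y ^ 2 = x ρ ^ 2 := by
      rw [hx ρ hρ, map_neg, neg_eq_iff_eq_neg.symm]
      exact hρy.symm
    have hxρ : x ρ ∈ adjoin L (x '' f.rootSet L) := subset_adjoin L _ ⟨ρ, hρ, rfl⟩
    rcases sq_eq_sq_iff_eq_or_eq_neg.mp hsq with rfl | rfl
    exacts [hxρ, neg_mem hxρ]
  | algebraMap c =>
    rw [IsScalarTower.algebraMap_apply K L M]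
    exact IntermediateField.algebraMap_mem _ _
  | add y y' _ _ hy hy' => exact add_mem hy hy'
  | mul y y' _ _ hy hy' => exact mul_mem hy hy'

theorem exists_sq_eq_algebraMap_neg_of_splits_comp {f : K[X]} (hf : f ≠ 0)
    (hM : ((f.comp (-X ^ 2)).map (algebraMap K M)).Splits) {ρ : L} (hρ : ρ ∈ f.rootSet L) :
    ∃ z : M, z ^ 2 = algebraMap L M (-ρ) := by
  have hfM : ((f.map (algebraMap K M)).comp (-X ^ 2)).Splits := by
    simpa [Polynomial.map_comp] using hM
  have hdvd : X - C (algebraMap L M ρ) ∣ f.map (algebraMap K M) := by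
    rw [dvd_iff_isRoot, IsRoot, eval_map_algebraMap, aeval_algebraMap_apply,
      aeval_eq_zero_of_mem_rootSet hρ, map_zero]
  obtain ⟨z, hz⟩ := exists_eval_eval_eq_zero_of_splits_comp
    (Polynomial.map_ne_zero hf) (by simp) hfM hdvd (by simp)
  simp only [eval_sub, eval_neg, eval_pow, eval_X, eval_C] at hz
  exact ⟨z, by rw [map_neg]; linear_combination -hz⟩

theorem finrank_of_isSplittingField_comp_neg_X_sq {f : K[X]} (h2 : (2 : K) ≠ 0) (hf : f ≠ 0)
    (hL : (f.map (algebraMap K L)).Splits) (hM : IsSplittingField K M (f.comp (-X ^ 2)))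
    (hsq : ∀ t : Finset L, ↑t ⊆ f.rootSet L → t.Nonempty → ¬IsSquare (∏ ρ ∈ t, -ρ)) :
    Module.finrank L M = 2 ^ Fintype.card (f.rootSet L) := by
  choose! x hx using fun ρ (hρ : ρ ∈ f.rootSet L) ↦
    exists_sq_eq_algebraMap_neg_of_splits_comp hf hM.splits hρ (M := M)
  have hbot (ρ : L) : algebraMap L M ρ ∈ (⊥ : IntermediateField L M) := mem_bot.mpr ⟨ρ, rfl⟩
  have hprod (t : Finset L) (htf : t ⊆ (f.rootSet L).toFinset) (ht : t.Nonempty) :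
      ∏ ρ ∈ t, x ρ ∉ (⊥ : IntermediateField L M) := fun h ↦ by
    rw [Set.subset_toFinset] at htf
    obtain ⟨z, hz⟩ := mem_bot.mp h
    refine hsq t htf ht ⟨z, (algebraMap L M).injective ?_⟩
    rw [map_prod, map_mul, hz, ← sq, ← Finset.prod_pow]
    exact Finset.prod_congr rfl fun ρ hρ ↦ (hx ρ (htf hρ)).symm
  have h2' : (2 : L) ≠ 0 :=
    fun h ↦ h2 ((algebraMap K L).injective (by rw [map_ofNat, map_zero, h]))
  have key := finrank_adjoin_image_of_sq_mem_bot h2'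
    (fun ρ hρ ↦ hx ρ (Set.mem_toFinset.mp hρ) ▸ hbot (-ρ)) hprod
  rwa [Set.coe_toFinset, adjoin_eq_top_of_isSplittingField_comp_neg_X_sq hf hL hM hx,
    IntermediateField.finrank_top', Set.toFinset_card] at key

end Composition

section RationalCoefficients

variable {k F K L M : Type*} [Field k] [Fintype k] [Field F] [Field K] [Field L] [Field M]
  [Algebra k F] [Algebra K L]

theorem not_isSquare_prod_neg_of_subset_rootSet [Algebra F L] [Algebra k L] [IsScalarTower k F L]
    {a : Fin 2 → K} {r s : L} (hrs : IsRationalBasis F ![r, s])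
    (hr : aeval r (affineTrinomial (Fintype.card k) a) = 0)
    (hs : aeval s (affineTrinomial (Fintype.card k) a) = 0) {t : Finset L}
    (htf : ↑t ⊆ (affineTrinomial (Fintype.card k) a).rootSet L) (ht : t.Nonempty) :
    ¬IsSquare (∏ ρ ∈ t, -ρ) := by
  classical
  have hne : r ≠ s := ne_of_algebraicIndependent_pair hrs.algebraicIndependent
  have hline : ↑t ⊆ lineMap r s '' (Set.univ : Set k) := fun ρ hρ ↦ by
    simpa using (aeval_affineTrinomial_eq_zero_iff hne hr hs).mp
      (aeval_eq_zero_of_mem_rootSet (htf hρ))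
  obtain ⟨u, -, rfl⟩ := Finset.subset_set_image_iff.mp hline
  have hlin (c : k) : MvPolynomial.aeval ![r, s]
      (-lineMap (MvPolynomial.X 0) (MvPolynomial.X 1) c : MvPolynomial (Fin 2) F) =
        -lineMap r s c := by
    simp [AffineMap.lineMap_apply, Algebra.smul_def, IsScalarTower.algebraMap_apply k F L,
      IsScalarTower.algebraMap_apply k F (MvPolynomial (Fin 2) F)]
  rw [Finset.prod_image fun _ _ _ _ h ↦ AffineMap.lineMap_injective k hne h]
  simp only [← hlin, ← map_prod]
  exact hrs.isSquare_aeval_iff.not.mpr (not_isSquare_prod_neg_lineMap_X (by simpa using ht))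

theorem natCast_card_eq_zero_of_algebra (k K : Type*) [Field k] [Fintype k] [Field K]
    [Algebra k K] : (Fintype.card k : K) = 0 := by
  rw [← map_natCast (algebraMap k K), FiniteField.cast_card_eq_zero, map_zero]

theorem two_ne_zero_of_odd_natCast_eq_zero {q : ℕ} (hodd : Odd q) (hq : (q : K) = 0) :
    (2 : K) ≠ 0 := by
  obtain ⟨m, rfl⟩ := hodd
  intro h2
  simp [h2] at hq

variable [Algebra F K] {a : Fin 2 → K} (ha : IsRationalBasis F a)

include ha

theorem exists_isRationalBasis_roots [Algebra k K] [Algebra F L] [IsScalarTower F K L]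
    [Algebra k L] [IsScalarTower k F L]
    (hL : IsSplittingField K L (affineTrinomial (Fintype.card k) a)) :
    ∃ r s : L, IsRationalBasis F ![r, s] ∧ aeval r (affineTrinomial (Fintype.card k) a) = 0 ∧
      aeval s (affineTrinomial (Fintype.card k) a) = 0 := by
  have hsep := separable_affineTrinomial (natCast_card_eq_zero_of_algebra k K)
    (ha.algebraicIndependent.ne_zero 1)
  obtain ⟨r, s, hrs, hr, hs⟩ :=
    exists_ne_aeval_affineTrinomial_eq_zero Fintype.one_lt_card hsep hL.splits
  exact ⟨r, s, isRationalBasis_of_roots ha hL hrs hr hs, hr, hs⟩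

theorem nonempty_algEquiv_mulEquiv_affineEquiv_of_isRationalBasis
    (hL : IsSplittingField K L (affineTrinomial (Fintype.card k) a)) :
    Nonempty ((L ≃ₐ[K] L) ≃* (k ≃ᵃ[k] k)) := by
  algebraize [(algebraMap F K).comp (algebraMap k F), (algebraMap K L).comp (algebraMap F K),
    (algebraMap K L).comp ((algebraMap F K).comp (algebraMap k F))]
  have : IsScalarTower k F L := .of_algebraMap_eq' rfl
  have := IsSplittingField.finiteDimensional L (affineTrinomial (Fintype.card k) a)
  obtain ⟨r, s, hrs, hr, hs⟩ := exists_isRationalBasis_roots (k := k) ha hL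
  have hne : r ≠ s := ne_of_algebraicIndependent_pair hrs.algebraicIndependent
  refine nonempty_algEquiv_mulEquiv_affineEquiv hne hr hs hL fun b d hbd ↦ ?_
  have hroot (c : k) : aeval (lineMap r s c : L) (affineTrinomial (Fintype.card k) a) = 0 :=
    (aeval_affineTrinomial_eq_zero_iff hne hr hs).mpr ⟨c, rfl⟩
  have hbd_basis := isRationalBasis_of_roots ha hL
    ((AffineMap.lineMap_injective k hne).ne hbd) (hroot b) (hroot d)
  exact exists_algEquiv_of_roots ha hrs hbd_basis.algebraicIndependent hr hs (hroot b) (hroot d)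

variable [Algebra K M]

theorem finrank_eq_two_pow_card_of_isSplittingField [Algebra L M] [IsScalarTower K L M]
    (hodd : Odd (Fintype.card k))
    (hL : IsSplittingField K L (affineTrinomial (Fintype.card k) a))
    (hM : IsSplittingField K M ((affineTrinomial (Fintype.card k) a).comp (-X ^ 2))) :
    Module.finrank L M = 2 ^ Fintype.card k := by
  algebraize [(algebraMap F K).comp (algebraMap k F), (algebraMap K L).comp (algebraMap F K),
    (algebraMap K L).comp ((algebraMap F K).comp (algebraMap k F))]
  have : IsScalarTower k F L := .of_algebraMap_eq' rfl
  have hq : (Fintype.card k : K) = 0 := natCast_card_eq_zero_of_algebra k K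
  have hsep := separable_affineTrinomial hq (ha.algebraicIndependent.ne_zero 1)
  obtain ⟨r, s, hrs, hr, hs⟩ := exists_isRationalBasis_roots (k := k) ha hL
  rw [finrank_of_isSplittingField_comp_neg_X_sq (two_ne_zero_of_odd_natCast_eq_zero hodd hq)
    hsep.ne_zero hL.splits hM fun t ↦ not_isSquare_prod_neg_of_subset_rootSet hrs hr hs,
    card_rootSet_eq_natDegree hsep hL.splits, natDegree_affineTrinomial Fintype.one_lt_card]

theorem card_algEquiv_of_isSplittingField_comp_neg_X_sq (hodd : Odd (Fintype.card k))
    (hM : IsSplittingField K M ((affineTrinomial (Fintype.card k) a).comp (-X ^ 2))) :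
    Nat.card (M ≃ₐ[K] M) =
      2 ^ Fintype.card k * (Fintype.card k * (Fintype.card k - 1)) := by
  algebraize [(algebraMap F K).comp (algebraMap k F)]
  set f := affineTrinomial (Fintype.card k) a with hf_def
  have hq : (Fintype.card k : K) = 0 := natCast_card_eq_zero_of_algebra k K
  have hf : f.Separable := separable_affineTrinomial hq (ha.algebraicIndependent.ne_zero 1)
  have hf0 : f.eval 0 ≠ 0 := by
    simpa [hf_def, affineTrinomial] using ha.algebraicIndependent.ne_zero 0
  have hfM : (f.map (algebraMap K M)).Splits :=
    splits_of_splits_comp (Polynomial.map_ne_zero hf.ne_zero) (g := -X ^ 2) (by simp) <| by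
      simpa [Polynomial.map_comp] using hM.splits
  let L := adjoin K (f.rootSet M)
  have hL : IsSplittingField K L f := adjoin_rootSet_isSplittingField hfM
  have hK_M : IsGalois K M := .of_separable_splitting_field <|
    separable_comp_neg_X_sq (two_ne_zero_of_odd_natCast_eq_zero hodd hq) hf hf0
  have hK_L : IsGalois K L := .of_separable_splitting_field hf
  have := hM.finiteDimensional
  obtain ⟨e⟩ := nonempty_algEquiv_mulEquiv_affineEquiv_of_isRationalBasis ha hL
  calc Nat.card (M ≃ₐ[K] M)
      = Module.finrank K L * Module.finrank L M := by
        rw [IsGalois.card_aut_eq_finrank, Module.finrank_mul_finrank]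
    _ = Nat.card (k ≃ᵃ[k] k) * 2 ^ Fintype.card k := by
        rw [← IsGalois.card_aut_eq_finrank, Nat.card_congr e.toEquiv,
          finrank_eq_two_pow_card_of_isSplittingField ha hodd hL hM]
    _ = 2 ^ Fintype.card k * (Fintype.card k * (Fintype.card k - 1)) := by
        rw [card_affineEquiv, mul_comm]

end RationalCoefficients

theorem generic_galois_group_artin_schreier_like_general
    {k : Type*} [Field k] [Fintype k] {F : Type*} [Field F] [Algebra k F]
    {K : Type*} [Field K] [Algebra (MvPolynomial (Fin 2) F) K]
    [IsFractionRing (MvPolynomial (Fin 2) F) K] {f : K[X]}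
    (hf : f = X ^ Fintype.card k +
        C (algebraMap (MvPolynomial (Fin 2) F) K (MvPolynomial.X 1)) * X +
        C (algebraMap (MvPolynomial (Fin 2) F) K (MvPolynomial.X 0))) :
    Nat.card (k ≃ᵃ[k] k) = Fintype.card k * (Fintype.card k - 1) ∧
    (∀ (L : Type*) [Field L] [Algebra K L], IsSplittingField K L f →
      Nonempty ((L ≃ₐ[K] L) ≃* (k ≃ᵃ[k] k))) ∧
    (Odd (Fintype.card k) → ∀ (M : Type*) [Field M] [Algebra K M],
      IsSplittingField K M (f.comp (-X ^ 2)) →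
      Nat.card (M ≃ₐ[K] M) =
        2 ^ Fintype.card k * (Fintype.card k * (Fintype.card k - 1))) := by
  subst hf
  algebraize [(algebraMap (MvPolynomial (Fin 2) F) K).comp
    (algebraMap F (MvPolynomial (Fin 2) F))]
  have hA := isRationalBasis_algebraMap_X (ι := Fin 2) (F := F) (E := K)
  exact ⟨card_affineEquiv k,
    fun _ _ _ hL ↦ nonempty_algEquiv_mulEquiv_affineEquiv_of_isRationalBasis hA hL,
    fun hodd _ _ _ hM ↦ card_algEquiv_of_isSplittingField_comp_neg_X_sq hA hodd hM⟩

/-- Let `p` be an odd prime, `k` the field with `p²` elements, `F` an extension of `k`,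
`K = F(A₀, A₁)` and `f = T^(p²) + A₁T + A₀ ∈ K[T]`. Then `Gal(f|K) ≅ Aff(k)` (the group
of affine transformations of `k`, of order `p²(p² - 1)`), and the Galois group of
`f(-T²)` over `K` has order `2^(p²)·p²·(p² - 1)`. -/
theorem generic_galois_group_artin_schreier_like
    (p : ℕ) (hp : p.Prime) (hodd : Odd p)
    (k : Type) [Field k] [Fintype k] (hcard : Fintype.card k = p ^ 2)
    (F : Type) [Field F] [Algebra k F]
    (K : Type) [Field K] [Algebra (MvPolynomial (Fin 2) F) K]
    [IsFractionRing (MvPolynomial (Fin 2) F) K]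
    (f : Polynomial K)
    (hf : f = Polynomial.X ^ (p ^ 2) +
        Polynomial.C (algebraMap (MvPolynomial (Fin 2) F) K (MvPolynomial.X 1)) *
          Polynomial.X +
        Polynomial.C (algebraMap (MvPolynomial (Fin 2) F) K (MvPolynomial.X 0))) :
    Nat.card (k ≃ᵃ[k] k) = p ^ 2 * (p ^ 2 - 1) ∧
    (∀ (L : Type) [Field L] [Algebra K L], Polynomial.IsSplittingField K L f →
      Nonempty ((L ≃ₐ[K] L) ≃* (k ≃ᵃ[k] k))) ∧
    (∀ (M : Type) [Field M] [Algebra K M],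
      Polynomial.IsSplittingField K M (f.comp (-(Polynomial.X ^ 2))) →
      Nat.card (M ≃ₐ[K] M) = 2 ^ (p ^ 2) * (p ^ 2 * (p ^ 2 - 1))) := by
  rw [← hcard] at hf ⊢
  obtain ⟨hAff, hL, hM⟩ := generic_galois_group_artin_schreier_like_general hf
  exact ⟨hAff, hL, hM (hcard ▸ hodd.pow)⟩
end

section
/- Let p be an odd prime and define c_p = 1/(2^{p²} p² (p² − 1)) + 1/(2^p p²) + (1/(2^{p²}(p² − 1))) · ∑_{d ∣ p²−1, d ≠ 1} 2^{(p²−1)(d−1)/d} φ(d), where φ is Euler's totient function. Then c_p ≥ φ(p² − 1)/(4(p² − 1)). -/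
theorem pow_mul_totient_le_sum_divisors_erase_one {R : Type*} [Semiring R] [PartialOrder R]
    [IsOrderedRing R] {a : R} (ha : 0 ≤ a) {n : ℕ} (hn : 1 < n) :
    a ^ (n - 1) * (n.totient : R) ≤
      ∑ d ∈ n.divisors.erase 1, a ^ (n * (d - 1) / d) * (d.totient : R) := by
  have n_mem : n ∈ n.divisors.erase 1 :=
    Finset.mem_erase.2 ⟨hn.ne', Nat.mem_divisors_self n (Nat.ne_zero_of_lt hn)⟩
  have term_nonneg : ∀ d ∈ n.divisors.erase 1, 0 ≤ a ^ (n * (d - 1) / d) * (d.totient : R) :=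
    fun d _ => mul_nonneg (pow_nonneg ha _) (Nat.cast_nonneg _)
  calc a ^ (n - 1) * (n.totient : R)
      = a ^ (n * (n - 1) / n) * (n.totient : R) := by
        rw [Nat.mul_div_cancel_left _ (Nat.zero_lt_of_lt hn)]
    _ ≤ _ := Finset.single_le_sum term_nonneg n_mem

/-- The summand `d = p² - 1` of `c_p` is exactly the left-hand side, since
`2 ^ (p² - 2) / 2 ^ p² = 1 / 4`; all other terms are nonnegative, and `1 / (2 ^ p * p²)` is
positive. -/
theorem landauShortIntervalConstant_lower_bound_general {p : ℕ} (hp : 2 ≤ p) :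
    (Nat.totient (p ^ 2 - 1) : ℝ) / (4 * ((p : ℝ) ^ 2 - 1)) < landauShortIntervalConstant p := by
  have four_le_sq : 4 ≤ p ^ 2 := Nat.pow_le_pow_left hp 2
  have sq_sub_one_pos : (0 : ℝ) < (p : ℝ) ^ 2 - 1 :=
    sub_pos.2 (one_lt_pow₀ (Nat.one_lt_cast.2 hp) two_ne_zero)
  have two_pow_sq : (2 : ℝ) ^ p ^ 2 = 2 ^ (p ^ 2 - 1 - 1) * 4 := by
    rw [show p ^ 2 = p ^ 2 - 1 - 1 + 2 by omega, pow_add]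
    norm_num
  calc (Nat.totient (p ^ 2 - 1) : ℝ) / (4 * ((p : ℝ) ^ 2 - 1))
      = 1 / (2 ^ p ^ 2 * ((p : ℝ) ^ 2 - 1)) *
          (2 ^ (p ^ 2 - 1 - 1) * (Nat.totient (p ^ 2 - 1) : ℝ)) := by
        rw [two_pow_sq]
        field_simp
    _ ≤ 1 / (2 ^ p ^ 2 * ((p : ℝ) ^ 2 - 1)) *
          ∑ d ∈ (p ^ 2 - 1).divisors.erase 1,
            (2 : ℝ) ^ ((p ^ 2 - 1) * (d - 1) / d) * (Nat.totient d : ℝ) := by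
        gcongr
        exact pow_mul_totient_le_sum_divisors_erase_one zero_le_two (by omega)
    _ < landauShortIntervalConstant p := lt_add_of_pos_left _ (by positivity)

/-- For an odd prime `p`, the constant `c_p` satisfies
`c_p ≥ φ(p² - 1)/(4(p² - 1))`. -/
theorem landauShortIntervalConstant_lower_bound (p : ℕ) (hp : p.Prime) (hodd : Odd p) :
    landauShortIntervalConstant p ≥
      (Nat.totient (p ^ 2 - 1) : ℝ) / (4 * ((p : ℝ) ^ 2 - 1)) :=
  (landauShortIntervalConstant_lower_bound_general hp.two_le).le
end
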